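/- arXiv:1908.06885 — 2 statements merged into one kernel-verified Lean document; each statement's English description precedes it below -/
import Mathlib

section
/- Let A and B be essential line arrangements of d lines in P^2 having the same weak combinatorics, i.e. n_j(A) = n_j(B) for every j ≥ 2. If 2·m(A) ≥ d, where m(A) is the maximal multiplicity of an intersection point of A, then r(A) = r(B). (In particular, when 2·m(A) ≥ d the invariant r(A) is determined by the weak combinatorics of A.) -/
open Classical MvPolynomial

variable {K : Type*} [Field K] [CharZero K] {ℓ : ℕ}

/-- A (central) hyperplane arrangement: a finite set of nonzero linear forms,
pairwise non-proportional. -/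
def IsArrangement (A : Finset (MvPolynomial (Fin ℓ) K)) : Prop :=
  (∀ α ∈ A, α ≠ 0 ∧ α.IsHomogeneous 1) ∧
    ∀ α ∈ A, ∀ β ∈ A, α ≠ β → ∀ c : K, α ≠ c • β

/-- The arrangement is essential: the common zero set of its forms is `{0}`. -/
def IsEssential (A : Finset (MvPolynomial (Fin ℓ) K)) : Prop :=
  ∀ v : Fin ℓ → K, (∀ α ∈ A, eval v α = 0) → v = 0

/-- The defining polynomial `Q(A)`. -/
noncomputable def Qpoly (A : Finset (MvPolynomial (Fin ℓ) K)) : MvPolynomial (Fin ℓ) K :=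
  ∏ α ∈ A, α

/-- Apply a derivation `θ = Σ θ_j ∂_j` to a polynomial. -/
noncomputable def applyDer (θ : Fin ℓ → MvPolynomial (Fin ℓ) K)
    (f : MvPolynomial (Fin ℓ) K) : MvPolynomial (Fin ℓ) K :=
  ∑ j, θ j * pderiv j f

/-- The minimal degree of a Jacobian relation `r(A)`. -/
noncomputable def mdr (A : Finset (MvPolynomial (Fin ℓ) K)) : ℕ :=
  sInf {r | ∃ θ : Fin ℓ → MvPolynomial (Fin ℓ) K, θ ≠ 0 ∧
    (∀ j, (θ j).IsHomogeneous r) ∧ applyDer θ (Qpoly A) = 0}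

/-- The number of elements `|A^H|` of the restriction of `A` to `H`:
the number of distinct subspaces `H ∩ ker α_L`, `L ∈ A \ {H}`. -/
noncomputable def restCard (A : Finset (MvPolynomial (Fin ℓ) K))
    (H : MvPolynomial (Fin ℓ) K) : ℕ :=
  ((A.erase H).image fun L => {v : Fin ℓ → K | eval v H = 0 ∧ eval v L = 0}).card

/-- The number `n_j(A)` of intersection points of multiplicity `j` of a line
arrangement `A` in `P^2`. An intersection point is encoded (bijectively) by the set
of lines of `A` passing through it, which has at least two elements. -/
noncomputable def nPoints (A : Finset (MvPolynomial (Fin 3) K)) (j : ℕ) : ℕ :=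
  Set.ncard {T : Finset (MvPolynomial (Fin 3) K) |
    ∃ v : Fin 3 → K, v ≠ 0 ∧ T = A.filter (fun α => eval v α = 0) ∧
      2 ≤ T.card ∧ T.card = j}

/-- The maximal multiplicity `m(A)` of an intersection point of `A`. -/
noncomputable def maxMult (A : Finset (MvPolynomial (Fin 3) K)) : ℕ :=
  sSup {j | 2 ≤ j ∧ nPoints A j ≠ 0}

/-- The global Tjurina number `τ(A) = Σ_{j ≥ 2} n_j(A)·(j−1)²` of a line arrangement. -/
noncomputable def tjurina (A : Finset (MvPolynomial (Fin 3) K)) : ℕ :=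
  ∑ j ∈ Finset.range (A.card + 1), nPoints A j * (j - 1) ^ 2

/-- `τ(d,r)_max = (d−1)(d−r−1) + r² − C(2r−d+2, 2)`, for `d/2 ≤ r ≤ d−1`. -/
def tauMax (d r : ℕ) : ℕ :=
  (d - 1) * (d - r - 1) + r ^ 2 - Nat.choose (2 * r - d + 2) 2

/-- A line arrangement `A` is maximal Tjurina of type `(d, r)` if it consists of `d`
lines, `r(A) = r` and `τ(A) = τ(d,r)_max`. -/
def IsMaxTjurina (A : Finset (MvPolynomial (Fin 3) K)) (d r : ℕ) : Prop :=
  A.card = d ∧ mdr A = r ∧ tjurina A = tauMax d r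

set_option linter.unusedSectionVars false
set_option linter.unusedVariables false
set_option linter.unusedSimpArgs false
set_option linter.style.longLine false
namespace WC

/-- The linear form with coefficient vector `a`. -/
noncomputable def lin (a : Fin 3 → K) : MvPolynomial (Fin 3) K := ∑ j, C (a j) * X j

/-- The contraction of a coefficient vector with a polynomial vector field. -/
noncomputable def ap (a : Fin 3 → K) (θ : Fin 3 → MvPolynomial (Fin 3) K) :
    MvPolynomial (Fin 3) K := ∑ j, C (a j) * θ j

/-- The determinant-like test functional, which kills multiples of the Euler field. -/
noncomputable def wedge (a b : Fin 3 → K) (θ : Fin 3 → MvPolynomial (Fin 3) K) :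
    MvPolynomial (Fin 3) K := lin a * ap b θ - lin b * ap a θ

lemma lin_of_homog {α : MvPolynomial (Fin 3) K} (h : α.IsHomogeneous 1) : ∃ a, α = lin a := by
  have h1 := h.sum_X_mul_pderiv
  have h2 : ∀ i, ∃ c : K, pderiv i α = C c := by
    intro i
    have := (h.pderiv (i := i))
    rw [Nat.sub_self, ← totalDegree_zero_iff_isHomogeneous, totalDegree_eq_zero_iff_eq_C] at this
    exact ⟨_, this⟩
  choose a ha using h2
  refine ⟨a, ?_⟩
  rw [one_smul] at h1
  rw [← h1, lin]
  exact Finset.sum_congr rfl fun i _ => by rw [ha, mul_comm]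

lemma eval_lin (a v : Fin 3 → K) : eval v (lin a) = ∑ j, a j * v j := by
  simp [lin]

lemma lin_homog (a : Fin 3 → K) : (lin a).IsHomogeneous 1 :=
  IsHomogeneous.sum _ _ _ fun j _ => isHomogeneous_C_mul_X _ _

lemma lin_smul (c : K) (a : Fin 3 → K) : lin (c • a) = C c * lin a := by
  simp [lin, Finset.mul_sum, mul_assoc]

lemma lin_add (a b : Fin 3 → K) : lin (a + b) = lin a + lin b := by
  simp [lin, Finset.sum_add_distrib, add_mul]

lemma lin_inj {a b : Fin 3 → K} (h : lin a = lin b) : a = b := by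
  funext j
  have := congrArg (eval (Pi.single j 1)) h
  simpa [eval_lin, Pi.single_apply] using this

lemma lin_ne_zero {a : Fin 3 → K} (h : a ≠ 0) : lin a ≠ 0 := by
  intro h0
  apply h
  apply lin_inj
  rw [h0]; simp [lin]

lemma applyDer_lin (θ : Fin 3 → MvPolynomial (Fin 3) K) (a : Fin 3 → K) :
    applyDer θ (lin a) = ap a θ := by
  simp [applyDer, lin, ap, pderiv_X, Fin.sum_univ_three, Pi.single_apply, Derivation.leibniz]
  ring

lemma applyDer_mul (θ : Fin 3 → MvPolynomial (Fin 3) K) (f g : MvPolynomial (Fin 3) K) :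
    applyDer θ (f * g) = applyDer θ f * g + f * applyDer θ g := by
  simp only [applyDer, Fin.sum_univ_three, Derivation.leibniz, smul_eq_mul]
  ring

/-- Projection along `v`, killing `α` when `α(v) = s⁻¹`. -/
noncomputable def proj (v : Fin 3 → K) (α : MvPolynomial (Fin 3) K) :
    MvPolynomial (Fin 3) K →ₐ[K] MvPolynomial (Fin 3) K :=
  aeval fun j => X j - C (v j) * α

lemma dvd_sub_proj (v : Fin 3 → K) (α P : MvPolynomial (Fin 3) K) : α ∣ P - proj v α P := by
  induction P using MvPolynomial.induction_on with
  | C a => simp [proj]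
  | add p q hp hq =>
    rw [map_add]
    have := dvd_add hp hq
    convert this using 1; ring
  | mul_X p j hp =>
    rw [map_mul]
    have h2 : proj v α (X j) = X j - C (v j) * α := by simp [proj]
    rw [h2]
    have : p * X j - proj v α p * (X j - C (v j) * α)
      = (p - proj v α p) * X j + α * (proj v α p * C (v j)) := by ring
    rw [this]
    exact dvd_add (hp.mul_right _) (dvd_mul_right _ _)

lemma proj_lin (v b : Fin 3 → K) (α : MvPolynomial (Fin 3) K) :
    proj v α (lin b) = lin b - C (eval v (lin b)) * α := by
  simp [proj, lin, Fin.sum_univ_three, MvPolynomial.algebraMap_eq]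
  ring

lemma proj_self {v a : Fin 3 → K} (h : eval v (lin a) = 1) : proj v (lin a) (lin a) = 0 := by
  rw [proj_lin, h]; simp

lemma dvd_iff_proj {v a : Fin 3 → K} (h : eval v (lin a) = 1) (P : MvPolynomial (Fin 3) K) :
    lin a ∣ P ↔ proj v (lin a) P = 0 := by
  constructor
  · rintro ⟨q, rfl⟩
    rw [map_mul, proj_self h, zero_mul]
  · intro h0
    have := dvd_sub_proj v (lin a) P
    rwa [h0, sub_zero] at this

lemma proj_idem {v a : Fin 3 → K} (h : eval v (lin a) = 1) (P : MvPolynomial (Fin 3) K) :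
    proj v (lin a) (proj v (lin a) P) = proj v (lin a) P := by
  have := (dvd_iff_proj h _).1 (dvd_sub_proj v (lin a) P)
  rw [map_sub, sub_eq_zero] at this
  exact this.symm

lemma exists_eval_one {a : Fin 3 → K} (h : a ≠ 0) : ∃ v, eval v (lin a) = 1 := by
  obtain ⟨j, hj⟩ := Function.ne_iff.1 h
  refine ⟨Pi.single j (a j)⁻¹, ?_⟩
  have hj' : a j ≠ 0 := hj
  simp [eval_lin, Pi.single_apply, hj']

lemma lin_prime {a : Fin 3 → K} (h : a ≠ 0) : Prime (lin a) := by
  obtain ⟨v, hv⟩ := exists_eval_one h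
  refine ⟨lin_ne_zero h, ?_, ?_⟩
  · intro hu
    have := (dvd_iff_proj hv 1).1 hu.dvd
    simp at this
  · intro p q hpq
    rw [dvd_iff_proj hv, map_mul] at hpq
    rw [dvd_iff_proj hv, dvd_iff_proj hv]
    exact mul_eq_zero.1 hpq

lemma lin_dvd_lin {a b : Fin 3 → K} (ha : a ≠ 0) (h : lin a ∣ lin b) : ∃ c : K, b = c • a := by
  obtain ⟨v, hv⟩ := exists_eval_one ha
  rw [dvd_iff_proj hv, proj_lin, sub_eq_zero, ← lin_smul] at h
  exact ⟨_, lin_inj h⟩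

lemma smul_eq_C (c : K) (p : MvPolynomial (Fin 3) K) : c • p = C c * p := by
  rw [MvPolynomial.smul_eq_C_mul]

section arr
variable {A : Finset (MvPolynomial (Fin 3) K)}

lemma arr_lin (hA : IsArrangement A) {α : MvPolynomial (Fin 3) K} (h : α ∈ A) :
    ∃ a, a ≠ 0 ∧ α = lin a := by
  obtain ⟨a, rfl⟩ := lin_of_homog (hA.1 α h).2
  refine ⟨a, ?_, rfl⟩
  rintro rfl
  exact (hA.1 _ h).1 (by simp [lin])

lemma arr_prime (hA : IsArrangement A) {α : MvPolynomial (Fin 3) K} (h : α ∈ A) : Prime α := by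
  obtain ⟨a, ha, rfl⟩ := arr_lin hA h
  exact lin_prime ha

lemma arr_dvd (hA : IsArrangement A) {α β : MvPolynomial (Fin 3) K} (hα : α ∈ A) (hβ : β ∈ A)
    (h : α ∣ β) : α = β := by
  by_contra hne
  obtain ⟨a, ha, rfl⟩ := arr_lin hA hα
  obtain ⟨b, hb, rfl⟩ := arr_lin hA hβ
  obtain ⟨c, hc⟩ := lin_dvd_lin ha h
  refine hA.2 _ hβ _ hα (Ne.symm hne) c ?_
  rw [smul_eq_C, ← lin_smul, hc]

lemma arr_relPrime (hA : IsArrangement A) {α β : MvPolynomial (Fin 3) K} (hα : α ∈ A)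
    (hβ : β ∈ A) (h : α ≠ β) : IsRelPrime α β := by
  rw [(arr_prime hA hα).irreducible.isRelPrime_iff_not_dvd]
  exact fun hd => h (arr_dvd hA hα hβ hd)

lemma arr_prod_dvd (hA : IsArrangement A) {T : Finset (MvPolynomial (Fin 3) K)} (hT : T ⊆ A)
    {P : MvPolynomial (Fin 3) K} (h : ∀ α ∈ T, α ∣ P) : ∏ α ∈ T, α ∣ P := by
  apply Finset.prod_dvd_of_isRelPrime _ h
  intro α hα β hβ hne
  exact arr_relPrime hA (hT hα) (hT hβ) hne

lemma prod_homog (hA : IsArrangement A) {T : Finset (MvPolynomial (Fin 3) K)} (hT : T ⊆ A) :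
    (∏ α ∈ T, α).IsHomogeneous T.card := by
  have := IsHomogeneous.prod T (fun α => α) (fun _ => 1) (fun α hα => (hA.1 α (hT hα)).2)
  simpa using this

lemma prod_ne_zero (hA : IsArrangement A) {T : Finset (MvPolynomial (Fin 3) K)} (hT : T ⊆ A) :
    (∏ α ∈ T, α) ≠ 0 :=
  Finset.prod_ne_zero_iff.2 fun α hα => (hA.1 α (hT hα)).1

/-- Killing the defining polynomial implies tangency to each line. -/
lemma tangent_of_kill (hA : IsArrangement A) {θ : Fin 3 → MvPolynomial (Fin 3) K}
    (h : applyDer θ (Qpoly A) = 0) {α : MvPolynomial (Fin 3) K} (hα : α ∈ A) :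
    α ∣ applyDer θ α := by
  have h1 : Qpoly A = α * ∏ β ∈ A.erase α, β := by
    rw [Qpoly, Finset.mul_prod_erase A (fun x => x) hα]
  rw [h1, applyDer_mul] at h
  have h2 : α ∣ applyDer θ α * ∏ β ∈ A.erase α, β := by
    rw [eq_neg_of_add_eq_zero_left h]
    exact (dvd_mul_right _ _).neg_right
  refine ((arr_prime hA hα).dvd_or_dvd h2).resolve_right ?_
  intro h3
  obtain ⟨β, hβ, hd⟩ := ((arr_prime hA hα).dvd_finsetProd_iff _).1 h3
  rw [Finset.mem_erase] at hβ
  exact hβ.1 (arr_dvd hA hα hβ.2 hd).symm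

lemma dvd_of_tangent {θ : Fin 3 → MvPolynomial (Fin 3) K} (T : Finset (MvPolynomial (Fin 3) K))
    (h : ∀ α ∈ T, α ∣ applyDer θ α) : ∏ α ∈ T, α ∣ applyDer θ (∏ α ∈ T, α) := by
  induction T using Finset.induction_on with
  | empty => simp
  | insert α T hα ih =>
    rw [Finset.prod_insert hα, applyDer_mul]
    apply dvd_add
    · exact mul_dvd_mul_right (h _ (Finset.mem_insert_self _ _)) _
    · exact mul_dvd_mul_left _ (ih fun β hβ => h β (Finset.mem_insert_of_mem hβ))

lemma comp_mul {P F : MvPolynomial (Fin 3) K} {i j : ℕ} (hF : F.IsHomogeneous j) :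
    homogeneousComponent (i + j) (P * F) = homogeneousComponent i P * F := by
  let _ : GradedAlgebra (homogeneousSubmodule (Fin 3) K) := MvPolynomial.gradedAlgebra
  have key : ∀ (P : MvPolynomial (Fin 3) K) (n : ℕ),
      (DirectSum.decompose (homogeneousSubmodule (Fin 3) K) P n : MvPolynomial (Fin 3) K)
        = homogeneousComponent n P := fun P n => decomposition.decompose'_apply P n
  have := DirectSum.coe_decompose_mul_add_of_right_mem (homogeneousSubmodule (Fin 3) K)
    (i := i) (j := j) (a := P) (b := F) hF
  rwa [key, key] at this

/-- From a tangent field with a nonzero `(k+1)`-component of a wedge, get a Jacobian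
relation of degree `k`. -/
lemma relation_of_tangent (hA : IsArrangement A) (hne : A.Nonempty)
    {θ : Fin 3 → MvPolynomial (Fin 3) K} (h : ∀ α ∈ A, α ∣ applyDer θ α) (a b : Fin 3 → K) (k : ℕ)
    (hw : homogeneousComponent (k + 1) (wedge a b θ) ≠ 0) :
    k ∈ {r | ∃ θ : Fin 3 → MvPolynomial (Fin 3) K, θ ≠ 0 ∧
    (∀ j, (θ j).IsHomogeneous r) ∧ applyDer θ (Qpoly A) = 0} := by
  obtain ⟨q, hq⟩ := dvd_of_tangent A h
  have hd : (A.card : K) ≠ 0 := by exact_mod_cast hne.card_pos.ne'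
  have hQ : (Qpoly A).IsHomogeneous A.card := prod_homog hA (Finset.Subset.refl _)
  have hE := hQ.sum_X_mul_pderiv
  set η : Fin 3 → MvPolynomial (Fin 3) K := fun j => θ j - C ((A.card : K)⁻¹) * q * X j with hη
  have hkill : applyDer η (Qpoly A) = 0 := by
    have e1 : applyDer η (Qpoly A) = applyDer θ (Qpoly A)
        - C ((A.card : K)⁻¹) * q * ∑ j, X j * pderiv j (Qpoly A) := by
      simp only [applyDer, hη, Fin.sum_univ_three]; ring
    rw [e1, hE]
    have : C ((A.card : K)⁻¹) * (A.card : MvPolynomial (Fin 3) K) = 1 := by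
      rw [← map_natCast (C : K →+* MvPolynomial (Fin 3) K), ← C_mul, inv_mul_cancel₀ hd, C_1]
    have hq' : applyDer θ (Qpoly A) = Qpoly A * q := hq
    rw [hq', nsmul_eq_mul]
    linear_combination (- q * Qpoly A) * this
  have hwη : wedge a b η = wedge a b θ := by
    simp only [wedge, ap, lin, hη, Fin.sum_univ_three]; ring
  refine ⟨fun j => homogeneousComponent k (η j), ?_, fun j => homogeneousComponent_isHomogeneous _ _, ?_⟩
  · intro h0
    apply hw
    rw [← hwη]
    have h0' : ∀ j, homogeneousComponent k (η j) = 0 := fun j => congrFun h0 j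
    have e2 : wedge a b η = ∑ j, η j * (C (b j) * lin a - C (a j) * lin b) := by
      simp only [wedge, ap, Fin.sum_univ_three]; ring
    rw [e2, map_sum]
    apply Finset.sum_eq_zero
    intro j _
    rw [comp_mul, h0', zero_mul]
    exact ((lin_homog a).C_mul _).sub ((lin_homog b).C_mul _)
  · have := congrArg (homogeneousComponent (k + (A.card - 1))) hkill
    rw [applyDer, map_sum, map_zero] at this
    rw [applyDer, ← this]
    exact Finset.sum_congr rfl fun j _ => (comp_mul hQ.pderiv).symm

/-! ### Linear algebra in dimension three -/

lemma para {n r : Fin 3 → K} (hn : n ≠ 0) (h : ∀ i j, r i * n j = r j * n i) :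
    ∃ c : K, r = c • n := by
  obtain ⟨j, hj⟩ := Function.ne_iff.1 hn
  have hj' : n j ≠ 0 := hj
  refine ⟨r j / n j, ?_⟩
  funext i
  have := h i j
  simp only [Pi.smul_apply, smul_eq_mul]
  field_simp
  exact this

/-- The cross product. -/
def cr (a b : Fin 3 → K) : Fin 3 → K :=
  ![a 1 * b 2 - a 2 * b 1, a 2 * b 0 - a 0 * b 2, a 0 * b 1 - a 1 * b 0]

lemma cr_ne {a b : Fin 3 → K} (ha : a ≠ 0) (h : ∀ c : K, b ≠ c • a) : cr a b ≠ 0 := by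
  intro h0
  have e0 := congrFun h0 0
  have e1 := congrFun h0 1
  have e2 := congrFun h0 2
  simp [cr] at e0 e1 e2
  obtain ⟨c, hc⟩ := para (n := a) (r := b) ha (by
    intro i j
    fin_cases i <;> fin_cases j <;> simp <;> first | ring1 | linear_combination e0 | linear_combination e1 | linear_combination e2 | linear_combination -e0 | linear_combination -e1 | linear_combination -e2)
  exact h c hc

lemma para_cr {a b r : Fin 3 → K} (h : cr a b ≠ 0) (ha : eval r (lin a) = 0)
    (hb : eval r (lin b) = 0) : ∃ c : K, r = c • cr a b := by
  simp only [eval_lin, Fin.sum_univ_three] at ha hb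
  apply para h
  intro i j
  fin_cases i <;> fin_cases j <;> simp [cr] <;> first
    | ring1
    | linear_combination (b 2) * ha - (a 2) * hb
    | linear_combination (a 2) * hb - (b 2) * ha
    | linear_combination (b 1) * ha - (a 1) * hb
    | linear_combination (a 1) * hb - (b 1) * ha
    | linear_combination (b 0) * ha - (a 0) * hb
    | linear_combination (a 0) * hb - (b 0) * ha

lemma span_cr {a b c : Fin 3 → K} (h : cr a b ≠ 0) (hc : eval (cr a b) (lin c) = 0) :
    ∃ x y : K, c = x • a + y • b := by
  obtain ⟨t, ht⟩ := exists_eval_one h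
  simp only [eval_lin, Fin.sum_univ_three] at ht hc
  refine ⟨∑ j, c j * cr b t j, ∑ j, c j * cr t a j, ?_⟩
  simp [cr] at ht hc
  funext i
  fin_cases i <;> simp [Fin.sum_univ_three, cr]
  · linear_combination (-c 0) * ht + t 0 * hc
  · linear_combination (-c 1) * ht + t 1 * hc
  · linear_combination (-c 2) * ht + t 2 * hc

lemma arr_cr (hA : IsArrangement A) {a b : Fin 3 → K} (ha : lin a ∈ A) (hb : lin b ∈ A)
    (h : lin a ≠ lin b) : cr a b ≠ 0 := by
  apply cr_ne
  · rintro rfl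
    exact (hA.1 _ ha).1 (by simp [lin])
  · rintro c rfl
    exact hA.2 _ hb _ ha (Ne.symm h) c (by rw [smul_eq_C, lin_smul])

lemma exists_point (hA : IsArrangement A) {α β : MvPolynomial (Fin 3) K} (hα : α ∈ A)
    (hβ : β ∈ A) (h : α ≠ β) : ∃ q : Fin 3 → K, q ≠ 0 ∧ eval q α = 0 ∧ eval q β = 0 := by
  obtain ⟨a, ha, rfl⟩ := arr_lin hA hα
  obtain ⟨b, hb, rfl⟩ := arr_lin hA hβ
  refine ⟨cr a b, arr_cr hA hα hβ h, ?_, ?_⟩ <;>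
  · simp [eval_lin, cr, Fin.sum_univ_three]; ring

lemma point_unique (hA : IsArrangement A) {α β : MvPolynomial (Fin 3) K} (hα : α ∈ A)
    (hβ : β ∈ A) (h : α ≠ β) {q r : Fin 3 → K} (hq : q ≠ 0) (h1 : eval q α = 0)
    (h2 : eval q β = 0) (h3 : eval r α = 0) (h4 : eval r β = 0) : ∃ c : K, r = c • q := by
  obtain ⟨a, ha, rfl⟩ := arr_lin hA hα
  obtain ⟨b, hb, rfl⟩ := arr_lin hA hβ
  have hn := arr_cr hA hα hβ h
  obtain ⟨c, hc⟩ := para_cr hn h1 h2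
  obtain ⟨c', hc'⟩ := para_cr hn h3 h4
  have hc0 : c ≠ 0 := by
    rintro rfl
    exact hq (by simp [hc])
  refine ⟨c' / c, ?_⟩
  rw [hc', hc, smul_smul, div_mul_cancel₀ _ hc0]

lemma three_span (hA : IsArrangement A) {α β γ : MvPolynomial (Fin 3) K} (hα : α ∈ A)
    (hβ : β ∈ A) (hγ : γ ∈ A) (h : α ≠ β) {q : Fin 3 → K} (hq : q ≠ 0) (h1 : eval q α = 0)
    (h2 : eval q β = 0) (h3 : eval q γ = 0) : ∃ x y : K, γ = C x * α + C y * β := by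
  obtain ⟨a, ha, rfl⟩ := arr_lin hA hα
  obtain ⟨b, hb, rfl⟩ := arr_lin hA hβ
  obtain ⟨c, hc, rfl⟩ := arr_lin hA hγ
  have hn := arr_cr hA hα hβ h
  obtain ⟨s, hs⟩ := para_cr hn h1 h2
  have hs0 : s ≠ 0 := by
    rintro rfl
    exact hq (by simp [hs])
  have h4 : eval (cr a b) (lin c) = 0 := by
    rw [eval_lin] at h3 ⊢
    simp only [hs, Pi.smul_apply, smul_eq_mul, Fin.sum_univ_three] at h3
    rw [Fin.sum_univ_three]
    have : s * (c 0 * cr a b 0 + c 1 * cr a b 1 + c 2 * cr a b 2) = 0 := by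
      linear_combination h3
    exact (mul_eq_zero.1 this).resolve_left hs0
  obtain ⟨x, y, hxy⟩ := span_cr hn h4
  exact ⟨x, y, by rw [hxy, lin_add, lin_smul, lin_smul]⟩

/-- A basis `v, e, f` with dual basis `w, a, b`. -/
structure Frame (v e f w a b : Fin 3 → K) : Prop where
  av : eval v (lin a) = 0
  bv : eval v (lin b) = 0
  wv : eval v (lin w) = 1
  ae : eval e (lin a) = 1
  be : eval e (lin b) = 0
  af : eval f (lin a) = 0
  bf : eval f (lin b) = 1
  res : ∀ j k, w k * v j + a k * e j + b k * f j = if j = k then 1 else 0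

lemma exists_frame {v : Fin 3 → K} (hv : v ≠ 0) : ∃ e f w a b, Frame v e f w a b := by
  obtain ⟨j, hj⟩ := Function.ne_iff.1 hv
  fin_cases j
  · have h : v 0 ≠ 0 := hj
    refine ⟨![0,1,0], ![0,0,1], ![(v 0)⁻¹,0,0], ![-(v 1)/v 0,1,0], ![-(v 2)/v 0,0,1],
      ?_, ?_, ?_, ?_, ?_, ?_, ?_, ?_⟩
    all_goals first
      | (intro j k; fin_cases j <;> fin_cases k <;> simp <;> field_simp <;> ring)
      | (simp [eval_lin, Fin.sum_univ_three]; done)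
      | (simp [eval_lin, Fin.sum_univ_three]; field_simp; done)
      | (simp [eval_lin, Fin.sum_univ_three]; field_simp; ring)
  · have h : v 1 ≠ 0 := hj
    refine ⟨![1,0,0], ![0,0,1], ![0,(v 1)⁻¹,0], ![1,-(v 0)/v 1,0], ![0,-(v 2)/v 1,1],
      ?_, ?_, ?_, ?_, ?_, ?_, ?_, ?_⟩
    all_goals first
      | (intro j k; fin_cases j <;> fin_cases k <;> simp <;> field_simp <;> ring)
      | (simp [eval_lin, Fin.sum_univ_three]; done)
      | (simp [eval_lin, Fin.sum_univ_three]; field_simp; done)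
      | (simp [eval_lin, Fin.sum_univ_three]; field_simp; ring)
  · have h : v 2 ≠ 0 := hj
    refine ⟨![1,0,0], ![0,1,0], ![0,0,(v 2)⁻¹], ![1,0,-(v 0)/v 2], ![0,1,-(v 1)/v 2],
      ?_, ?_, ?_, ?_, ?_, ?_, ?_, ?_⟩
    all_goals first
      | (intro j k; fin_cases j <;> fin_cases k <;> simp <;> field_simp <;> ring)
      | (simp [eval_lin, Fin.sum_univ_three]; done)
      | (simp [eval_lin, Fin.sum_univ_three]; field_simp; done)
      | (simp [eval_lin, Fin.sum_univ_three]; field_simp; ring)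

section frame
variable {v e f w a b : Fin 3 → K}

lemma Frame.vec (F : Frame v e f w a b) (c : Fin 3 → K) :
    c = eval v (lin c) • w + eval e (lin c) • a + eval f (lin c) • b := by
  funext k
  have h0 := F.res 0 k
  have h1 := F.res 1 k
  have h2 := F.res 2 k
  simp only [eval_lin, Fin.sum_univ_three, Pi.add_apply, Pi.smul_apply, smul_eq_mul]
  have h3 : c k = c 0 * (if (0 : Fin 3) = k then 1 else 0) + c 1 * (if (1 : Fin 3) = k then 1 else 0)
      + c 2 * (if (2 : Fin 3) = k then 1 else 0) := by
    fin_cases k <;> simp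
  rw [h3, ← h0, ← h1, ← h2]; ring

lemma ap_add (a b : Fin 3 → K) (θ : Fin 3 → MvPolynomial (Fin 3) K) :
    ap (a + b) θ = ap a θ + ap b θ := by
  simp [ap, Finset.sum_add_distrib, add_mul]

lemma ap_smul (c : K) (a : Fin 3 → K) (θ : Fin 3 → MvPolynomial (Fin 3) K) :
    ap (c • a) θ = C c * ap a θ := by
  simp [ap, Finset.mul_sum, mul_assoc]

lemma Frame.lin_eq (F : Frame v e f w a b) (c : Fin 3 → K) :
    lin c = C (eval v (lin c)) * lin w + C (eval e (lin c)) * lin a + C (eval f (lin c)) * lin b := by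
  conv_lhs => rw [F.vec c]
  rw [lin_add, lin_add, lin_smul, lin_smul, lin_smul]

lemma Frame.ap_eq (F : Frame v e f w a b) (c : Fin 3 → K) (θ : Fin 3 → MvPolynomial (Fin 3) K) :
    ap c θ = C (eval v (lin c)) * ap w θ + C (eval e (lin c)) * ap a θ
      + C (eval f (lin c)) * ap b θ := by
  conv_lhs => rw [F.vec c]
  rw [ap_add, ap_add, ap_smul, ap_smul, ap_smul]

lemma Frame.coord (F : Frame v e f w a b) (θ : Fin 3 → MvPolynomial (Fin 3) K) (j : Fin 3) :
    θ j = C (v j) * ap w θ + C (e j) * ap a θ + C (f j) * ap b θ := by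
  have h0 := congrArg (C : K → MvPolynomial (Fin 3) K) (F.res j 0)
  have h1 := congrArg (C : K → MvPolynomial (Fin 3) K) (F.res j 1)
  have h2 := congrArg (C : K → MvPolynomial (Fin 3) K) (F.res j 2)
  simp only [C_add, C_mul] at h0 h1 h2
  have h3 : θ j = C (if j = 0 then 1 else 0) * θ 0 + C (if j = 1 then 1 else 0) * θ 1
      + C (if j = 2 then 1 else 0) * θ 2 := by
    fin_cases j <;> simp
  rw [h3, ← h0, ← h1, ← h2]
  simp only [ap, Fin.sum_univ_three]; ring

lemma ap_homog {k : ℕ} {θ : Fin 3 → MvPolynomial (Fin 3) K} (h : ∀ j, (θ j).IsHomogeneous k)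
    (c : Fin 3 → K) : (ap c θ).IsHomogeneous k :=
  IsHomogeneous.sum _ _ _ fun j _ => (h j).C_mul _

lemma wedge_homog {k : ℕ} {θ : Fin 3 → MvPolynomial (Fin 3) K} (h : ∀ j, (θ j).IsHomogeneous k)
    (c d : Fin 3 → K) : (wedge c d θ).IsHomogeneous (k + 1) := by
  have h1 := (lin_homog c).mul (ap_homog h d)
  have h2 := (lin_homog d).mul (ap_homog h c)
  rw [add_comm k 1]
  exact h1.sub h2

/-- Lines through the point divide the wedge. -/
lemma Frame.dvd_wedge (hA : IsArrangement A) (F : Frame v e f w a b)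
    {θ : Fin 3 → MvPolynomial (Fin 3) K} {α : MvPolynomial (Fin 3) K} (hα : α ∈ A)
    (hv : eval v α = 0) (h : α ∣ applyDer θ α) : α ∣ wedge a b θ := by
  obtain ⟨c, hc, rfl⟩ := arr_lin hA hα
  rw [applyDer_lin] at h
  obtain ⟨q, hq⟩ := h
  have h1 := F.lin_eq c
  have h2 := F.ap_eq c θ
  rw [hv, C_0, zero_mul, zero_add] at h1 h2
  set s := eval e (lin c)
  set t := eval f (lin c)
  by_cases hs : s = 0
  · have ht : t ≠ 0 := by
      intro ht
      rw [hs, ht] at h1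
      exact lin_ne_zero hc (by simpa using h1)
    have hu : IsUnit (C t : MvPolynomial (Fin 3) K) := (isUnit_iff_ne_zero.2 ht).map C
    rw [← hu.dvd_mul_left]
    refine ⟨lin a * q - ap a θ, ?_⟩
    rw [wedge]
    linear_combination (ap a θ) * h1 - lin a * h2 + lin a * hq
  · have hu : IsUnit (C s : MvPolynomial (Fin 3) K) := (isUnit_iff_ne_zero.2 hs).map C
    rw [← hu.dvd_mul_left]
    refine ⟨ap b θ - lin b * q, ?_⟩
    rw [wedge]
    linear_combination (- ap b θ) * h1 + lin b * h2 - lin b * hq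

/-- A nonzero Jacobian relation of small degree has nonzero wedge. -/
lemma Frame.wedge_ne (hA : IsArrangement A) (F : Frame v e f w a b)
    {θ : Fin 3 → MvPolynomial (Fin 3) K} {k : ℕ} (hθ : θ ≠ 0) (hk : ∀ j, (θ j).IsHomogeneous k)
    (hkill : applyDer θ (Qpoly A) = 0) (hlt : k < (A.filter fun α => ¬ eval v α = 0).card) :
    wedge a b θ ≠ 0 := by
  intro h0
  have ha : a ≠ 0 := by
    rintro rfl
    have := F.ae
    simp [lin] at this
  have hdvd : lin a ∣ lin b * ap a θ := by
    rw [wedge, sub_eq_zero] at h0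
    exact ⟨_, h0.symm⟩
  have hndvd : ¬ lin a ∣ lin b := by
    intro h
    obtain ⟨c, hc⟩ := lin_dvd_lin ha h
    have h1 := F.bf
    rw [hc, lin_smul, map_mul, F.af, mul_zero] at h1
    exact zero_ne_one h1
  obtain ⟨q, hq⟩ := ((lin_prime ha).dvd_or_dvd hdvd).resolve_left hndvd
  have hq2 : ap b θ = lin b * q := by
    apply mul_left_cancel₀ (lin_ne_zero ha)
    rw [wedge, hq] at h0
    linear_combination h0
  set c := ap w θ - lin w * q with hc
  have hdvdc : ∏ α ∈ A.filter (fun α => ¬ eval v α = 0), α ∣ c := by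
    apply arr_prod_dvd hA (Finset.filter_subset _ _)
    intro α hα
    rw [Finset.mem_filter] at hα
    have ht := tangent_of_kill hA hkill hα.1
    obtain ⟨u, hu, rfl⟩ := arr_lin hA hα.1
    rw [applyDer_lin, F.ap_eq u θ] at ht
    have hun : IsUnit (C (eval v (lin u)) : MvPolynomial (Fin 3) K) :=
      (isUnit_iff_ne_zero.2 hα.2).map C
    rw [← hun.dvd_mul_left]
    have e1 : C (eval v (lin u)) * c = (C (eval v (lin u)) * ap w θ + C (eval e (lin u)) * ap a θ
      + C (eval f (lin u)) * ap b θ) - lin u * q := by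
      rw [hc, hq, hq2]
      linear_combination q * F.lin_eq u
    rw [e1]
    exact dvd_sub ht (dvd_mul_right _ _)
  have hc0 : c = 0 := by
    by_contra hne
    obtain ⟨r, hr⟩ := hdvdc
    have hsub : A.filter (fun α => ¬ eval v α = 0) ⊆ A := Finset.filter_subset _ _
    have hr0 : r ≠ 0 := by
      rintro rfl
      exact hne (by rw [hr, mul_zero])
    have hd := totalDegree_mul_of_isDomain (prod_ne_zero hA hsub) hr0
    rw [← hr, (prod_homog hA hsub).totalDegree
      (prod_ne_zero hA hsub)] at hd
    have hwq : (lin w * q).totalDegree ≤ k := by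
      by_cases hq0 : q = 0
      · rw [hq0, mul_zero, totalDegree_zero]; exact Nat.zero_le _
      · have h1 := totalDegree_mul_of_isDomain (lin_ne_zero ha) hq0
        rw [← hq, (lin_homog a).totalDegree (lin_ne_zero ha)] at h1
        have h2 := (ap_homog hk a).totalDegree_le
        have h3 := totalDegree_mul (lin w) q
        have h4 := (lin_homog w).totalDegree_le
        omega
    have h5 : c.totalDegree ≤ k := by
      refine (totalDegree_sub _ _).trans (max_le (ap_homog hk w).totalDegree_le hwq)
    omega
  have hX : ∀ j, θ j = q * X j := by
    intro j
    have h1 := F.coord θ j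
    have h2 := F.coord (fun j => X j) j
    change (X j : MvPolynomial (Fin 3) K) = C (v j) * lin w + C (e j) * lin a + C (f j) * lin b at h2
    rw [hq, hq2, sub_eq_zero.1 (hc.symm.trans hc0)] at h1
    rw [h1, h2]; ring
  have hQ : (Qpoly A).IsHomogeneous A.card := prod_homog hA (Finset.Subset.refl _)
  have hE := hQ.sum_X_mul_pderiv
  have hk2 : q * (A.card • Qpoly A) = 0 := by
    rw [← hE, ← hkill, applyDer, Finset.mul_sum]
    exact Finset.sum_congr rfl fun j _ => by rw [hX j]; ring
  have hcard : A.card ≠ 0 := by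
    have := Finset.card_filter_le A (fun α => ¬ eval v α = 0)
    omega
  have hq0 : q = 0 := by
    rcases mul_eq_zero.1 hk2 with h | h
    · exact h
    · rw [nsmul_eq_mul] at h
      rcases mul_eq_zero.1 h with h | h
      · exact absurd (by exact_mod_cast h) hcard
      · exact absurd h (prod_ne_zero hA (Finset.Subset.refl _))
  exact hθ (by funext j; rw [hX j, hq0, zero_mul]; rfl)

/-! ### Relations built from and controlled by a multiple point -/

lemma ap_const (c v : Fin 3 → K) (P : MvPolynomial (Fin 3) K) :
    ap c (fun j => C (v j) * P) = C (eval v (lin c)) * P := by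
  simp only [ap, eval_lin, Fin.sum_univ_three, C_add, C_mul]; ring

/-- The set of degrees of nonzero Jacobian relations. -/
def relSet (A : Finset (MvPolynomial (Fin 3) K)) : Set ℕ :=
  {r | ∃ θ : Fin 3 → MvPolynomial (Fin 3) K, θ ≠ 0 ∧
    (∀ j, (θ j).IsHomogeneous r) ∧ applyDer θ (Qpoly A) = 0}

/-- Modularity of the point `v`. -/
def Modular (A : Finset (MvPolynomial (Fin 3) K)) (v : Fin 3 → K) : Prop :=
  ∀ α ∈ A, ∀ β ∈ A, α ≠ β → ¬ eval v α = 0 → ¬ eval v β = 0 → ∀ q : Fin 3 → K, q ≠ 0 →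
    eval q α = 0 → eval q β = 0 → ∃ γ ∈ A, eval v γ = 0 ∧ eval q γ = 0

lemma Frame.upper (hA : IsArrangement A) (hne : A.Nonempty) (F : Frame v e f w a b) :
    (A.filter fun α => ¬ eval v α = 0).card ∈ relSet A := by
  have hsub : A.filter (fun α => ¬ eval v α = 0) ⊆ A := Finset.filter_subset _ _
  set h := ∏ α ∈ A.filter (fun α => ¬ eval v α = 0), α with hh
  have ha : a ≠ 0 := by
    rintro rfl
    have := F.ae
    simp [lin] at this
  refine relation_of_tangent hA hne (θ := fun j => C (v j) * h) ?_ a w _ ?_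
  · intro α hα
    by_cases h0 : eval v α = 0
    · obtain ⟨c, hc, rfl⟩ := arr_lin hA hα
      rw [applyDer_lin, ap_const, h0, C_0, zero_mul]
      exact dvd_zero _
    · have : α ∣ h := Finset.dvd_prod_of_mem (fun x => x) (Finset.mem_filter.2 ⟨hα, h0⟩)
      obtain ⟨c, hc, rfl⟩ := arr_lin hA hα
      rw [applyDer_lin, ap_const]
      exact this.mul_left _
  · have e1 : wedge a w (fun j => C (v j) * h) = h * lin a := by
      rw [wedge, ap_const, ap_const, F.av, F.wv, C_0, C_1]; ring
    have e2 : (h * lin a).IsHomogeneous ((A.filter fun α => ¬ eval v α = 0).card + 1) :=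
      (prod_homog hA hsub).mul (lin_homog a)
    rw [e1, homogeneousComponent_eq_self e2]
    exact mul_ne_zero (prod_ne_zero hA hsub) (lin_ne_zero ha)

lemma eval_ap (c q : Fin 3 → K) (θ : Fin 3 → MvPolynomial (Fin 3) K) :
    eval q (ap c θ) = eval (fun j => eval q (θ j)) (lin c) := by
  simp [ap, eval_lin]

lemma Frame.lower (hA : IsArrangement A) (F : Frame v e f w a b) {k : ℕ} (hk : k ∈ relSet A)
    (hlt : k < (A.filter fun α => ¬ eval v α = 0).card) :
    (A.filter fun α => eval v α = 0).card ≤ k + 1 ∧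
      ((A.filter fun α => eval v α = 0).card = k + 1 → Modular A v) := by
  obtain ⟨θ, hθ, hhom, hkill⟩ := hk
  have hsub : A.filter (fun α => eval v α = 0) ⊆ A := Finset.filter_subset _ _
  have hw := F.wedge_ne hA hθ hhom hkill hlt
  have hd : ∏ α ∈ A.filter (fun α => eval v α = 0), α ∣ wedge a b θ := by
    apply arr_prod_dvd hA hsub
    intro α hα
    rw [Finset.mem_filter] at hα
    exact F.dvd_wedge hA hα.1 hα.2 (tangent_of_kill hA hkill hα.1)
  obtain ⟨r, hr⟩ := hd
  have hr0 : r ≠ 0 := by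
    rintro rfl
    exact hw (by rw [hr, mul_zero])
  have hdeg := totalDegree_mul_of_isDomain (prod_ne_zero hA hsub) hr0
  rw [← hr, (prod_homog hA hsub).totalDegree (prod_ne_zero hA hsub),
    (wedge_homog hhom a b).totalDegree hw] at hdeg
  refine ⟨by omega, ?_⟩
  intro hm
  have hr1 : r.totalDegree = 0 := by omega
  rw [totalDegree_eq_zero_iff_eq_C] at hr1
  intro α hα β hβ hab hvα hvβ q hq hqα hqβ
  have hz : ∀ γ ∈ A, eval q γ = 0 → eval (fun j => eval q (θ j)) γ = 0 := by
    intro γ hγ h0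
    obtain ⟨s, hs⟩ := tangent_of_kill hA hkill hγ
    obtain ⟨c, hc, rfl⟩ := arr_lin hA hγ
    rw [← eval_ap, ← applyDer_lin, hs, map_mul, h0, zero_mul]
  obtain ⟨c, hc⟩ := point_unique hA hα hβ hab hq hqα hqβ (hz α hα hqα) (hz β hβ hqβ)
  have h0 : eval q (wedge a b θ) = 0 := by
    rw [wedge, map_sub, map_mul, map_mul, eval_ap, eval_ap, hc]
    simp only [eval_lin, Fin.sum_univ_three, Pi.smul_apply, smul_eq_mul]; ring
  rw [hr, map_mul, hr1, eval_C] at h0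
  have hc0 : coeff 0 r ≠ 0 := by
    intro h
    rw [h, C_0] at hr1
    exact hr0 hr1
  have h1 := (mul_eq_zero.1 h0).resolve_right hc0
  rw [map_prod, Finset.prod_eq_zero_iff] at h1
  obtain ⟨γ, hγ, hγ0⟩ := h1
  rw [Finset.mem_filter] at hγ
  exact ⟨γ, hγ.1, hγ.2, hγ0⟩

lemma applyDer_prod_zero {θ : Fin 3 → MvPolynomial (Fin 3) K}
    (T : Finset (MvPolynomial (Fin 3) K)) (h : ∀ α ∈ T, applyDer θ α = 0) :
    applyDer θ (∏ α ∈ T, α) = 0 := by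
  induction T using Finset.induction_on with
  | empty => simp [applyDer]
  | insert α T hα ih =>
    rw [Finset.prod_insert hα, applyDer_mul, h _ (Finset.mem_insert_self _ _),
      ih fun β hβ => h β (Finset.mem_insert_of_mem hβ)]
    simp

lemma Frame.base (hA : IsArrangement A) (F : Frame v e f w a b) :
    ∃ θ : Fin 3 → MvPolynomial (Fin 3) K,
      (∀ α ∈ A.filter (fun α => eval v α = 0), α ∣ applyDer θ α) ∧
      wedge a b θ = (A.filter fun α => eval v α = 0).card •
        ∏ α ∈ A.filter (fun α => eval v α = 0), α := by
  have hsub : A.filter (fun α => eval v α = 0) ⊆ A := Finset.filter_subset _ _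
  set g := ∏ α ∈ A.filter (fun α => eval v α = 0), α with hg
  set De := applyDer (fun j => C (e j)) g with hDe
  set Df := applyDer (fun j => C (f j)) g with hDf
  have hconst : ∀ c u : Fin 3 → K, applyDer (fun j => C (u j)) (lin c) = C (eval u (lin c)) := by
    intro c u
    have := ap_const c u 1
    simp only [mul_one] at this
    rw [applyDer_lin, this]
  have hap : ∀ c : Fin 3 → K, ap c (fun j => C (f j) * De - C (e j) * Df)
      = C (eval f (lin c)) * De - C (eval e (lin c)) * Df := by
    intro c
    rw [← ap_const, ← ap_const]
    simp only [ap, Fin.sum_univ_three]; ring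
  refine ⟨fun j => C (f j) * De - C (e j) * Df, ?_, ?_⟩
  · intro α hα
    have h1 : g = α * ∏ β ∈ (A.filter (fun α => eval v α = 0)).erase α, β :=
      (Finset.mul_prod_erase _ (fun x => x) hα).symm
    obtain ⟨c, hc, rfl⟩ := arr_lin hA (hsub hα)
    rw [applyDer_lin, hap, hDe, hDf, h1, applyDer_mul, applyDer_mul, hconst, hconst]
    refine ⟨C (eval f (lin c)) * applyDer (fun j => C (e j)) (∏ β ∈ (A.filter (fun α => eval v α = 0)).erase (lin c), β) - C (eval e (lin c)) * applyDer (fun j => C (f j)) (∏ β ∈ (A.filter (fun α => eval v α = 0)).erase (lin c), β), ?_⟩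
    ring
  · have hDv : applyDer (fun j => C (v j)) g = 0 := by
      apply applyDer_prod_zero
      intro α hα
      have h0 := (Finset.mem_filter.1 hα).2
      obtain ⟨c, hc, rfl⟩ := arr_lin hA (hsub hα)
      rw [hconst, h0, C_0]
    have hE := (prod_homog hA hsub).sum_X_mul_pderiv
    rw [← hg] at hE
    rw [← hE, wedge, hap, hap, F.ae, F.be, F.af, F.bf]
    have hX : ∀ j, (X j : MvPolynomial (Fin 3) K)
        = C (v j) * lin w + C (e j) * lin a + C (f j) * lin b :=
      fun j => F.coord (fun j => X j) j
    have e1 : ∑ i, X i * (pderiv i) g = lin w * applyDer (fun j => C (v j)) g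
        + lin a * De + lin b * Df := by
      rw [hDe, hDf]
      simp only [applyDer, Fin.sum_univ_three]
      linear_combination (pderiv 0 g) * hX 0 + (pderiv 1 g) * hX 1 + (pderiv 2 g) * hX 2
    rw [e1, hDv]
    simp

lemma Frame.step (hA : IsArrangement A) (F : Frame v e f w a b) (hmod : Modular A v)
    (T : Finset (MvPolynomial (Fin 3) K)) (hT : T ⊆ A.filter fun α => ¬ eval v α = 0) :
    ∃ θ : Fin 3 → MvPolynomial (Fin 3) K,
      (∀ α ∈ A.filter (fun α => eval v α = 0), α ∣ applyDer θ α) ∧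
      (∀ α ∈ T, α ∣ applyDer θ α) ∧
      wedge a b θ = (A.filter fun α => eval v α = 0).card •
        ∏ α ∈ A.filter (fun α => eval v α = 0), α := by
  induction T using Finset.induction_on with
  | empty =>
    obtain ⟨θ, h1, h2⟩ := F.base hA
    exact ⟨θ, h1, by simp, h2⟩
  | insert α T hαT ih =>
    obtain ⟨θ, hθ1, hθ2, hθ3⟩ := ih ((Finset.subset_insert _ _).trans hT)
    have hα := Finset.mem_filter.1 (hT (Finset.mem_insert_self _ _))
    have hTA : ∀ β ∈ T, β ∈ A ∧ ¬ eval v β = 0 := fun β hβ =>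
      Finset.mem_filter.1 (hT (Finset.mem_insert_of_mem hβ))
    have hTsub : T ⊆ A := fun β hβ => (hTA β hβ).1
    obtain ⟨u, hu, rfl⟩ := arr_lin hA hα.1
    obtain ⟨hαA, hs⟩ := hα
    set s := eval v (lin u) with hsdef
    set v' : Fin 3 → K := s⁻¹ • v with hv'
    have hev : ∀ c, eval v' (lin c) = s⁻¹ * eval v (lin c) := by
      intro c
      simp only [eval_lin, hv', Pi.smul_apply, smul_eq_mul, Fin.sum_univ_three]; ring
    have hone : eval v' (lin u) = 1 := by rw [hev, ← hsdef, inv_mul_cancel₀ hs]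
    have hφβ : ∀ β ∈ A, eval v β = 0 → proj v' (lin u) β = β := by
      intro β hβ h0
      obtain ⟨c, hc, rfl⟩ := arr_lin hA hβ
      rw [proj_lin, hev, h0]; simp
    -- each earlier line is a combination of the new line and a line through the point
    have hcomb : ∀ β ∈ T, ∃ γ, γ ∈ A.filter (fun α => eval v α = 0) ∧
        ∃ t y : K, t ≠ 0 ∧ y ≠ 0 ∧ β = C t * lin u + C y * γ := by
      intro β hβ
      obtain ⟨hβA, hβv⟩ := hTA β hβ
      have hne : lin u ≠ β := by
        rintro rfl
        exact hαT hβ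
      obtain ⟨q, hq, hq1, hq2⟩ := exists_point hA hαA hβA hne
      obtain ⟨γ, hγA, hγv, hγq⟩ := hmod _ hαA _ hβA hne hs hβv q hq hq1 hq2
      have hne2 : lin u ≠ γ := by
        rintro rfl
        exact hs hγv
      obtain ⟨t, y, hty⟩ := three_span hA hαA hγA hβA hne2 hq hq1 hγq hq2
      refine ⟨γ, Finset.mem_filter.2 ⟨hγA, hγv⟩, t, y, ?_, ?_, hty⟩
      · rintro rfl
        apply hβv
        rw [hty]; simp [hγv]
      · rintro rfl
        apply hA.2 _ hβA _ hαA (Ne.symm hne) t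
        rw [hty, smul_eq_C]; simp
    choose! γ hγ t y ht hy hβeq using hcomb
    have hφ : ∀ β ∈ T, proj v' (lin u) β = C (y β) * γ β := by
      intro β hβ
      have hg := Finset.mem_filter.1 (hγ β hβ)
      conv_lhs => rw [hβeq β hβ]
      rw [map_add, map_mul, map_mul, proj_self hone, hφβ _ hg.1 hg.2, mul_zero, zero_add]
      simp [proj]
    have hcluster : ∀ δ ∈ A.filter (fun α => eval v α = 0),
        (∏ β ∈ T with γ β = δ, proj v' (lin u) β) ∣ proj v' (lin u) (applyDer θ (lin u)) := by
      intro δ hδ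
      obtain ⟨μ, hμ⟩ := hθ1 δ hδ
      have h1 : ∏ β ∈ T with γ β = δ, β ∣ applyDer θ (lin u) - μ * lin u := by
        apply arr_prod_dvd hA ((Finset.filter_subset _ _).trans hTsub)
        intro β hβ
        obtain ⟨hβT, hβδ⟩ := Finset.mem_filter.1 hβ
        have hun : IsUnit (C (t β) : MvPolynomial (Fin 3) K) :=
          (isUnit_iff_ne_zero.2 (ht β hβT)).map C
        rw [← hun.dvd_mul_left]
        have hder : applyDer θ β = C (t β) * applyDer θ (lin u) + C (y β) * applyDer θ δ := by
          have h2 := hβeq β hβT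
          rw [hβδ] at h2
          conv_lhs => rw [h2]
          simp only [applyDer, Fin.sum_univ_three, map_add, pderiv_C_mul, smul_eq_C]
          ring
        have h3 : C (t β) * (applyDer θ (lin u) - μ * lin u) = applyDer θ β - μ * β := by
          have h2 := hβeq β hβT
          rw [hβδ] at h2
          rw [hder, hμ]
          linear_combination μ * h2
        rw [h3]
        exact dvd_sub (hθ2 β hβT) (dvd_mul_left _ _)
      have h4 := map_dvd (proj v' (lin u)) h1
      rw [map_prod, map_sub, map_mul, proj_self hone, mul_zero, sub_zero] at h4
      exact h4
    have hdvd : (∏ β ∈ T, proj v' (lin u) β) ∣ proj v' (lin u) (applyDer θ (lin u)) := by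
      rw [← Finset.prod_fiberwise_of_maps_to hγ]
      apply Finset.prod_dvd_of_isRelPrime _ hcluster
      intro δ hδ δ' hδ' hne
      apply IsRelPrime.prod_left
      intro β hβ
      apply IsRelPrime.prod_right
      intro β' hβ'
      obtain ⟨hβT, hβδ⟩ := Finset.mem_filter.1 hβ
      obtain ⟨hβT', hβδ'⟩ := Finset.mem_filter.1 hβ'
      have hun : IsUnit (C (y β) : MvPolynomial (Fin 3) K) :=
        (isUnit_iff_ne_zero.2 (hy β hβT)).map C
      have hun' : IsUnit (C (y β') : MvPolynomial (Fin 3) K) :=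
        (isUnit_iff_ne_zero.2 (hy β' hβT')).map C
      rw [hφ β hβT, hφ β' hβT', hβδ, hβδ', isRelPrime_mul_unit_left_left hun,
        isRelPrime_mul_unit_left_right hun']
      exact arr_relPrime hA (Finset.mem_filter.1 hδ).1 (Finset.mem_filter.1 hδ').1 hne
    obtain ⟨q, hq⟩ := hdvd
    have hq' : proj v' (lin u) (applyDer θ (lin u))
        = proj v' (lin u) (∏ β ∈ T, β) * proj v' (lin u) q := by
      rw [← map_prod] at hq
      have := congrArg (proj v' (lin u)) hq
      rwa [map_mul, proj_idem hone, proj_idem hone] at this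
    set P := C (-s⁻¹) * q * ∏ β ∈ T, β with hP
    have hder : ∀ c, applyDer (fun j => θ j + C (v j) * P) (lin c)
        = applyDer θ (lin c) + C (eval v (lin c)) * P := by
      intro c
      rw [applyDer_lin, applyDer_lin, ← ap_const]
      simp only [ap, Fin.sum_univ_three]; ring
    refine ⟨fun j => θ j + C (v j) * P, ?_, ?_, ?_⟩
    · intro β hβ
      have hd := hθ1 β hβ
      obtain ⟨hβA, hβv⟩ := Finset.mem_filter.1 hβ
      obtain ⟨c, hc, rfl⟩ := arr_lin hA hβA
      rw [hder, hβv, C_0, zero_mul, add_zero]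
      exact hd
    · intro β hβ
      rcases Finset.mem_insert.1 hβ with rfl | hβT
      · rw [hder, dvd_iff_proj hone, map_add, map_mul, hP, map_mul, map_mul, hq', ← hsdef]
        have h5 : ∀ x : K, proj v' (lin u) (C x) = C x := by intro x; simp [proj]
        rw [h5, h5]
        have h6 : (C s * C (-s⁻¹) : MvPolynomial (Fin 3) K) = -1 := by
          rw [← C_mul, mul_neg, mul_inv_cancel₀ hs, C_neg, C_1]
        linear_combination (proj v' (lin u) q * proj v' (lin u) (∏ β ∈ T, β)) * h6
      · have hd := hθ2 β hβT
        have hd2 : β ∣ ∏ β ∈ T, β := Finset.dvd_prod_of_mem (fun x => x) hβT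
        obtain ⟨c, hc, rfl⟩ := arr_lin hA (hTA β hβT).1
        rw [hder]
        exact dvd_add hd ((hd2.mul_left _).mul_left _)
    · rw [← hθ3]
      have h7 := ap_const a v P
      have h8 := ap_const b v P
      rw [F.av, C_0, zero_mul] at h7
      rw [F.bv, C_0, zero_mul] at h8
      have h9 : ∀ c : Fin 3 → K, ap c (fun j => θ j + C (v j) * P)
          = ap c θ + ap c (fun j => C (v j) * P) := by
        intro c
        simp only [ap, Fin.sum_univ_three]; ring
      rw [wedge, wedge, h9, h9, h7, h8, add_zero, add_zero]

lemma Frame.upper_mod (hA : IsArrangement A) (F : Frame v e f w a b) (hmod : Modular A v) {k : ℕ}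
    (hk : (A.filter fun α => eval v α = 0).card = k + 1) : k ∈ relSet A := by
  have hsub : A.filter (fun α => eval v α = 0) ⊆ A := Finset.filter_subset _ _
  have hne : A.Nonempty := by
    apply Finset.Nonempty.mono hsub
    rw [← Finset.card_pos]; omega
  obtain ⟨θ, h1, h2, h3⟩ := F.step hA hmod _ (Finset.Subset.refl _)
  refine relation_of_tangent hA hne (θ := θ) ?_ a b k ?_
  · intro α hα
    by_cases h0 : eval v α = 0
    · exact h1 α (Finset.mem_filter.2 ⟨hα, h0⟩)
    · exact h2 α (Finset.mem_filter.2 ⟨hα, h0⟩)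
  · have h4 := prod_homog hA hsub
    rw [hk] at h4
    rw [h3, map_nsmul, homogeneousComponent_eq_self h4, hk, nsmul_eq_mul]
    refine mul_ne_zero ?_ (prod_ne_zero hA hsub)
    exact_mod_cast Nat.succ_ne_zero k

lemma mdr_lt (hA : IsArrangement A) (hne : A.Nonempty) (hv : v ≠ 0)
    (hlt : (A.filter fun α => ¬ eval v α = 0).card < (A.filter fun α => eval v α = 0).card) :
    mdr A = (A.filter fun α => ¬ eval v α = 0).card := by
  obtain ⟨e, f, w, a, b, F⟩ := exists_frame hv
  have h1 := F.upper hA hne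
  apply le_antisymm (Nat.sInf_le h1)
  apply le_csInf ⟨_, h1⟩
  intro k hk
  by_contra h
  have := (F.lower hA hk (not_le.1 h)).1
  omega

lemma mdr_eq (hA : IsArrangement A) (hv : v ≠ 0) {k : ℕ}
    (h1 : (A.filter fun α => ¬ eval v α = 0).card = k + 1)
    (h2 : (A.filter fun α => eval v α = 0).card = k + 1) :
    mdr A = if Modular A v then k else k + 1 := by
  obtain ⟨e, f, w, a, b, F⟩ := exists_frame hv
  have hne : A.Nonempty := by
    apply Finset.Nonempty.mono (Finset.filter_subset (fun α => eval v α = 0) A)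
    rw [← Finset.card_pos]; omega
  split_ifs with hmod
  · have h3 := F.upper_mod hA hmod h2
    apply le_antisymm (Nat.sInf_le h3)
    apply le_csInf ⟨_, h3⟩
    intro j hj
    by_contra h
    have := (F.lower hA hj (by omega)).1
    omega
  · have h3 := F.upper hA hne
    rw [h1] at h3
    apply le_antisymm (Nat.sInf_le h3)
    apply le_csInf ⟨_, h3⟩
    intro j hj
    by_contra h
    have := F.lower hA hj (by omega)
    exact hmod (this.2 (by omega))


/-- The lines of `A` through `v`. -/
noncomputable def thru (A : Finset (MvPolynomial (Fin 3) K)) (v : Fin 3 → K) :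
    Finset (MvPolynomial (Fin 3) K) := A.filter fun α => eval v α = 0

/-- The intersection points, encoded by sets of lines. -/
noncomputable def points (A : Finset (MvPolynomial (Fin 3) K)) :
    Finset (Finset (MvPolynomial (Fin 3) K)) :=
  A.powerset.filter fun T => ∃ v : Fin 3 → K, v ≠ 0 ∧ T = thru A v ∧ 2 ≤ T.card

lemma mem_thru {v : Fin 3 → K} {α : MvPolynomial (Fin 3) K} :
    α ∈ thru A v ↔ α ∈ A ∧ eval v α = 0 := by
  simp [thru]

lemma mem_points {T : Finset (MvPolynomial (Fin 3) K)} :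
    T ∈ points A ↔ ∃ v : Fin 3 → K, v ≠ 0 ∧ T = thru A v ∧ 2 ≤ T.card := by
  simp only [points, Finset.mem_filter, Finset.mem_powerset, and_iff_right_iff_imp]
  rintro ⟨v, -, rfl, -⟩
  exact Finset.filter_subset _ _

lemma nPoints_eq (j : ℕ) : nPoints A j = ((points A).filter fun T => T.card = j).card := by
  rw [nPoints, ← Set.ncard_coe_finset]
  congr 1
  ext T
  simp only [Set.mem_ofPred_eq, Finset.coe_filter, mem_points, thru]
  constructor
  · rintro ⟨v, h1, h2, h3, h4⟩
    exact ⟨⟨v, h1, h2, h3⟩, h4⟩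
  · rintro ⟨⟨v, h1, h2, h3⟩, h4⟩
    exact ⟨v, h1, h2, h3, h4⟩

lemma points_subset {T : Finset (MvPolynomial (Fin 3) K)} (h : T ∈ points A) : T ⊆ A := by
  simp only [points, Finset.mem_filter, Finset.mem_powerset] at h
  exact h.1

lemma points_sum : ∑ T ∈ points A, (T.card - 1) =
    ∑ j ∈ Finset.range (A.card + 1), nPoints A j * (j - 1) := by
  rw [← Finset.sum_fiberwise_of_maps_to (s := points A) (t := Finset.range (A.card + 1))
    (g := fun T => T.card)]
  · refine Finset.sum_congr rfl fun j _ => ?_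
    rw [nPoints_eq, Finset.sum_const_nat]
    intro T hT
    rw [(Finset.mem_filter.mp hT).2]
  · intro T hT
    rw [Finset.mem_range]
    exact Nat.lt_succ_of_le (Finset.card_le_card (points_subset hT))

lemma points_unique (hA : IsArrangement A) {T T' : Finset (MvPolynomial (Fin 3) K)}
    (hT : T ∈ points A) (hT' : T' ∈ points A) {α β : MvPolynomial (Fin 3) K}
    (hne : α ≠ β) (h1 : α ∈ T) (h2 : β ∈ T) (h3 : α ∈ T') (h4 : β ∈ T') : T = T' := by
  have key : ∀ T T' : Finset (MvPolynomial (Fin 3) K), T ∈ points A → T' ∈ points A →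
      α ∈ T → β ∈ T → α ∈ T' → β ∈ T' → T ⊆ T' := by
    intro T T' hT hT' h1 h2 h3 h4
    obtain ⟨v, hv, rfl, -⟩ := mem_points.mp hT
    obtain ⟨w, hw, rfl, -⟩ := mem_points.mp hT'
    rw [mem_thru] at h1 h2 h3 h4
    obtain ⟨c, rfl⟩ := point_unique hA h1.1 h2.1 hne hv h1.2 h2.2 h3.2 h4.2
    intro γ hγ
    rw [mem_thru] at hγ ⊢
    refine ⟨hγ.1, ?_⟩
    obtain ⟨a, -, rfl⟩ := arr_lin hA hγ.1
    have := hγ.2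
    rw [eval_lin] at this ⊢
    have h5 : ∑ j, a j * (c • v) j = c * ∑ j, a j * v j := by
      rw [Finset.mul_sum]
      refine Finset.sum_congr rfl fun j _ => ?_
      simp only [Pi.smul_apply, smul_eq_mul]
      ring
    rw [h5, this, mul_zero]
  exact (key T T' hT hT' h1 h2 h3 h4).antisymm (key T' T hT' hT h3 h4 h1 h2)

lemma points_exists (hA : IsArrangement A) {α β : MvPolynomial (Fin 3) K}
    (hα : α ∈ A) (hβ : β ∈ A) (hne : α ≠ β) : ∃ T ∈ points A, α ∈ T ∧ β ∈ T := by
  obtain ⟨q, hq, h1, h2⟩ := exists_point hA hα hβ hne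
  have m1 : α ∈ thru A q := mem_thru.mpr ⟨hα, h1⟩
  have m2 : β ∈ thru A q := mem_thru.mpr ⟨hβ, h2⟩
  exact ⟨thru A q, mem_points.mpr ⟨q, hq, rfl, Finset.one_lt_card.mpr ⟨α, m1, β, m2, hne⟩⟩, m1, m2⟩

lemma pair_count (hA : IsArrangement A) {T₀ : Finset (MvPolynomial (Fin 3) K)}
    (h0 : T₀ ∈ points A) :
    ∑ T ∈ points A, (T ∩ T₀).card * (T \ T₀).card = T₀.card * (A \ T₀).card := by
  have hd : ((points A : Finset _) : Set (Finset (MvPolynomial (Fin 3) K))).PairwiseDisjoint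
      (fun T => (T ∩ T₀) ×ˢ (T \ T₀)) := by
    intro T hT T' hT' hne
    rw [Function.onFun, Finset.disjoint_left]
    rintro ⟨α, β⟩ h1 h2
    simp only [Finset.mem_product, Finset.mem_inter, Finset.mem_sdiff] at h1 h2
    refine hne (points_unique hA hT hT' (α := α) (β := β) ?_ h1.1.1 h1.2.1 h2.1.1 h2.2.1)
    rintro rfl
    exact h1.2.2 h1.1.2
  have hc := Finset.card_biUnion hd
  simp only [Finset.card_product] at hc
  rw [← hc, ← Finset.card_product]
  congr 1
  ext ⟨α, β⟩
  simp only [Finset.mem_biUnion, Finset.mem_product, Finset.mem_inter, Finset.mem_sdiff]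
  constructor
  · rintro ⟨T, hT, h1, h2⟩
    exact ⟨h1.2, points_subset hT h2.1, h2.2⟩
  · rintro ⟨h1, h2, h3⟩
    obtain ⟨T, hT, h4, h5⟩ := points_exists hA (points_subset h0 h1) h2
      (by rintro rfl; exact h3 h1)
    exact ⟨T, hT, ⟨h4, h1⟩, h5, h3⟩

lemma points_sum_eq (hA : IsArrangement A) {T₀ : Finset (MvPolynomial (Fin 3) K)}
    (h0 : T₀ ∈ points A) :
    ∑ T ∈ points A, (T.card - 1) = (T₀.card - 1) + T₀.card * (A \ T₀).card +
      ∑ T ∈ (points A).filter (fun T => T ∩ T₀ = ∅), (T.card - 1) := by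
  rw [← pair_count hA h0, Finset.sum_filter, ← Finset.add_sum_erase _ _ h0,
    ← Finset.add_sum_erase _ (fun T => (T ∩ T₀).card * (T \ T₀).card) h0,
    ← Finset.add_sum_erase _ (fun T => if T ∩ T₀ = ∅ then T.card - 1 else 0) h0]
  have hne : T₀ ≠ ∅ := by
    obtain ⟨v, -, -, h⟩ := mem_points.mp h0
    rintro rfl
    simp at h
  simp only [Finset.inter_self, hne, Finset.sdiff_self, Finset.card_empty, mul_zero, if_false,
    zero_add]
  rw [add_assoc, ← Finset.sum_add_distrib]
  congr 1
  refine Finset.sum_congr rfl fun T hT => ?_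
  rw [Finset.mem_erase] at hT
  have h1 : (T ∩ T₀).card ≤ 1 := by
    by_contra h
    push Not at h
    obtain ⟨α, ha, β, hb, hab⟩ := Finset.one_lt_card.mp h
    rw [Finset.mem_inter] at ha hb
    exact hT.1 (points_unique hA hT.2 h0 hab ha.1 hb.1 ha.2 hb.2)
  have h2 := Finset.card_inter_add_card_sdiff T T₀
  by_cases h : T ∩ T₀ = ∅
  · simp [h]
  · have h3 : (T ∩ T₀).card = 1 :=
      le_antisymm h1 (Finset.card_pos.mpr (Finset.nonempty_iff_ne_empty.mpr h))
    rw [h3] at h2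
    rw [h3, if_neg h]
    omega

lemma modular_iff (hA : IsArrangement A) {u : Fin 3 → K} (h0 : thru A u ∈ points A) :
    Modular A u ↔ ∑ T ∈ points A, (T.card - 1) =
      ((thru A u).card - 1) + (thru A u).card * (A \ thru A u).card := by
  rw [points_sum_eq hA h0, Nat.add_eq_left, Finset.sum_eq_zero_iff]
  constructor
  · intro hM T hT
    rw [Finset.mem_filter] at hT
    exfalso
    obtain ⟨q, hq, rfl, hc⟩ := mem_points.mp hT.1
    obtain ⟨α, ha, β, hb, hab⟩ := Finset.one_lt_card.mp hc
    have hn : ∀ γ ∈ thru A q, ¬ eval u γ = 0 := by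
      intro γ hγ h
      have : γ ∈ thru A q ∩ thru A u :=
        Finset.mem_inter.mpr ⟨hγ, mem_thru.mpr ⟨(mem_thru.mp hγ).1, h⟩⟩
      rw [hT.2] at this
      simp at this
    obtain ⟨γ, hγ, h1, h2⟩ := hM α (mem_thru.mp ha).1 β (mem_thru.mp hb).1 hab (hn α ha) (hn β hb)
      q hq (mem_thru.mp ha).2 (mem_thru.mp hb).2
    exact hn γ (mem_thru.mpr ⟨hγ, h2⟩) h1
  · intro hs α ha β hb hab _ _ q hq h1 h2
    have m1 : α ∈ thru A q := mem_thru.mpr ⟨ha, h1⟩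
    have m2 : β ∈ thru A q := mem_thru.mpr ⟨hb, h2⟩
    have hc : 1 < (thru A q).card := Finset.one_lt_card.mpr ⟨α, m1, β, m2, hab⟩
    have hT : thru A q ∈ points A := mem_points.mpr ⟨q, hq, rfl, hc⟩
    have hne : thru A q ∩ thru A u ≠ ∅ := by
      intro h
      have := hs _ (Finset.mem_filter.mpr ⟨hT, h⟩)
      omega
    obtain ⟨γ, hγ⟩ := Finset.nonempty_iff_ne_empty.mpr hne
    rw [Finset.mem_inter, mem_thru, mem_thru] at hγ
    exact ⟨γ, hγ.1.1, hγ.2.2, hγ.1.2⟩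

lemma exists_thru {j : ℕ} (h : nPoints A j ≠ 0) :
    ∃ u : Fin 3 → K, u ≠ 0 ∧ thru A u ∈ points A ∧ (thru A u).card = j := by
  rw [nPoints_eq] at h
  obtain ⟨T, hT⟩ := Finset.card_pos.mp (Nat.pos_of_ne_zero h)
  rw [Finset.mem_filter] at hT
  obtain ⟨u, hu, rfl, -⟩ := mem_points.mp hT.1
  exact ⟨u, hu, hT.1, hT.2⟩

lemma maxMult_mem (h : 0 < maxMult A) : 2 ≤ maxMult A ∧ nPoints A (maxMult A) ≠ 0 := by
  have hne : {j | 2 ≤ j ∧ nPoints A j ≠ 0}.Nonempty := by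
    by_contra hn
    rw [Set.not_nonempty_iff_eq_empty] at hn
    rw [maxMult, hn] at h
    simp at h
  have hb : BddAbove {j | 2 ≤ j ∧ nPoints A j ≠ 0} := by
    refine ⟨A.card, ?_⟩
    rintro j ⟨-, hj⟩
    obtain ⟨u, -, h1, rfl⟩ := exists_thru hj
    exact Finset.card_le_card (points_subset h1)
  exact Nat.sSup_mem hne hb

lemma mdr_value (hA : IsArrangement A) (hne : A.Nonempty) {m : ℕ} (h2 : 2 ≤ m)
    (hm : nPoints A m ≠ 0) (hd : A.card ≤ 2 * m) :
    mdr A = if A.card < 2 * m then A.card - m else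
      if ∑ j ∈ Finset.range (A.card + 1), nPoints A j * (j - 1) = (m - 1) + m * m
        then m - 1 else m := by
  obtain ⟨u, hu, h0, hc⟩ := exists_thru hm
  have hs : (A.filter fun α => eval u α = 0).card + (A.filter fun α => ¬ eval u α = 0).card =
    A.card := Finset.card_filter_add_card_filter_not _
  have hc' : (A.filter fun α => eval u α = 0).card = m := hc
  split_ifs with h1 h3
  · rw [mdr_lt hA hne hu (by omega)]
    omega
  all_goals
    obtain ⟨k, rfl⟩ : ∃ k, m = k + 1 := ⟨m - 1, by omega⟩
    have hsd : (A \ thru A u).card = k + 1 := by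
      rw [Finset.card_sdiff_of_subset (points_subset h0), hc]
      omega
    have hM := modular_iff hA h0
    rw [points_sum, hc, hsd] at hM
    rw [mdr_eq hA hu (by omega) hc']
  · rw [if_pos (hM.mpr h3)]
    omega
  · rw [if_neg (fun h => h3 (hM.mp h))]

end frame
end arr
end WC
/-- Let `A` and `B` be essential line arrangements of `d` lines in `P^2`
having the same weak combinatorics, i.e. `n_j(A) = n_j(B)` for every `j ≥ 2`.
If `2·m(A) ≥ d`, where `m(A)` is the maximal multiplicity of an intersection point of
`A`, then `r(A) = r(B)`. -/
theorem mdr_weak_combinatorics (d : ℕ) (A B : Finset (MvPolynomial (Fin 3) K))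
    (hA : IsArrangement A) (hAess : IsEssential A)
    (hB : IsArrangement B) (hBess : IsEssential B)
    (hcardA : A.card = d) (hcardB : B.card = d)
    (hweak : ∀ j, 2 ≤ j → nPoints A j = nPoints B j)
    (hm : d ≤ 2 * maxMult A) :
    mdr A = mdr B := by
  have hne : ∀ C : Finset (MvPolynomial (Fin 3) K), IsEssential C → C.Nonempty := by
    intro C hC
    by_contra h
    rw [Finset.not_nonempty_iff_eq_empty] at h
    subst h
    have := congrFun (hC (fun _ => 1) (by simp)) 0
    simp at this
  have hA0 := hne A hAess
  have hB0 := hne B hBess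
  have hpos : 0 < maxMult A := by
    have := Finset.card_pos.mpr hA0
    omega
  obtain ⟨h2, h3⟩ := WC.maxMult_mem hpos
  have h4 : nPoints B (maxMult A) ≠ 0 := by
    rw [← hweak _ h2]
    exact h3
  rw [WC.mdr_value hA hA0 h2 h3 (by omega), WC.mdr_value hB hB0 h2 h4 (by omega), hcardA, hcardB]
  have hsum : ∑ j ∈ Finset.range (d + 1), nPoints A j * (j - 1) =
      ∑ j ∈ Finset.range (d + 1), nPoints B j * (j - 1) := by
    refine Finset.sum_congr rfl fun j _ => ?_
    by_cases hj : 2 ≤ j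
    · rw [hweak j hj]
    · have : j - 1 = 0 := by omega
      rw [this, mul_zero, mul_zero]
  rw [hsum]
end

section
/- For every pair of integers (d, r) with d ≥ 4 and d/2 ≤ r ≤ 2(d−1)/3 (i.e. 2r ≥ d and 3r ≤ 2(d−1)), there exists a line arrangement A of d lines in the real projective plane which is maximal Tjurina of type (d, r). -/
open Classical MvPolynomial

variable {K : Type*} [Field K] [CharZero K] {ℓ : ℕ}

/-! ### Generalities -/

lemma homog_of_X_mul {g : MvPolynomial (Fin 3) ℝ} {r : ℕ}
    (h : (X 2 * g).IsHomogeneous (r + 1)) : g.IsHomogeneous r := by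
  intro m hm
  have h' := @h (Finsupp.single 2 1 + m) (by rw [coeff_X_mul]; exact hm)
  rw [map_add] at h'
  have h2 : Finsupp.weight (1 : Fin 3 → ℕ) (Finsupp.single 2 1) = 1 := by
    simp [Finsupp.weight_single]
  rw [h2] at h'
  omega

/-- Homogeneous forms of degree `e` vanishing on the triangular lattice are zero. -/
lemma lattice_zero {F : MvPolynomial (Fin 3) ℝ} {e : ℕ} (hF : F.IsHomogeneous e)
    (hv : ∀ t s : ℕ, t + s ≤ e → eval ![(t : ℝ), s, 1] F = 0) : F = 0 := by
  set G : MvPolynomial (Fin 2) ℝ := aeval ![X 0, X 1, 1] F with hG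
  have hGe : ∀ x : Fin 2 → ℝ, eval x G = eval ![x 0, x 1, 1] F := by
    intro x
    rw [hG, ← MvPolynomial.coe_aeval_eq_eval, ← MvPolynomial.coe_aeval_eq_eval]
    simp only [RingHom.coe_coe]
    rw [← AlgHom.comp_apply, comp_aeval]
    congr 2
    funext i
    fin_cases i <;> simp
  have hdeg : G.totalDegree ≤ e := by
    rw [hG, aeval_def, eval₂_eq]
    apply totalDegree_finsetSum_le
    intro m hm
    refine (totalDegree_mul _ _).trans ?_
    have h1 : (algebraMap ℝ (MvPolynomial (Fin 2) ℝ) (coeff m F)).totalDegree = 0 := by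
      rw [algebraMap_eq]; exact totalDegree_C _
    rw [h1, zero_add]
    refine (totalDegree_finsetProd _ _).trans ?_
    have h2 := hF.degree_eq_sum_deg_support hm
    rw [h2]
    apply Finset.sum_le_sum
    intro i _
    refine (totalDegree_pow _ _).trans ?_
    have h3 : (![X 0, X 1, 1] i : MvPolynomial (Fin 2) ℝ).totalDegree ≤ 1 := by
      fin_cases i <;> simp
    exact (Nat.mul_le_mul_left _ h3).trans (by simp)
  have hG0 : G = 0 := by
    by_contra hne
    obtain ⟨m, hm, hmd⟩ := Finset.exists_mem_eq_sup G.support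
      (support_nonempty.2 hne) (fun m => m.degree)
    have htd : G.totalDegree = m.degree := by
      rw [← hmd, totalDegree]
      rfl
    let S : Fin 2 → Finset ℝ := fun i =>
      (Finset.range (m i + 1)).image (fun t : ℕ => (t : ℝ))
    obtain ⟨x, hx, hxne⟩ := combinatorial_nullstellensatz_exists_eval_nonzero G m
      (mem_support_iff.1 hm) htd S (by
        intro i
        simp only [S]
        rw [Finset.card_image_of_injective _ Nat.cast_injective]
        simp)
    have h0 := hx 0
    have h1 := hx 1
    simp only [S, Finset.mem_image, Finset.mem_range] at h0 h1
    obtain ⟨t, ht, ht'⟩ := h0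
    obtain ⟨s, hs, hs'⟩ := h1
    apply hxne
    rw [hGe, ← ht', ← hs']
    apply hv
    have : m.degree = m 0 + m 1 := by
      rw [Finsupp.degree_eq_sum, Fin.sum_univ_two]
    omega
  have hz : X 2 * F = 0 := by
    apply MvPolynomial.funext
    intro x
    by_cases h2 : x 2 = 0
    · simp [h2]
    · have h3 := hGe ![x 0 / x 2, x 1 / x 2]
      rw [hG0] at h3
      have h4 : x = x 2 • ![x 0 / x 2, x 1 / x 2, 1] := by
        funext i
        fin_cases i <;> simp <;> field_simp
      have h5 : eval x F = 0 := by
        rw [h4, eval_eq]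
        simp only [map_zero, Matrix.cons_val_zero, Matrix.cons_val_one] at h3
        rw [eval_eq] at h3
        rw [← mul_zero (x 2 ^ e), h3, Finset.mul_sum]
        apply Finset.sum_congr rfl
        intro m hm
        rw [hF.degree_eq_sum_deg_support hm, ← Finset.prod_pow_eq_pow_sum]
        simp only [Pi.smul_apply, smul_eq_mul, mul_pow, Finset.prod_mul_distrib]
        ring
      simp [h5]
  rcases mul_eq_zero.1 hz with h | h
  · exact absurd h (X_ne_zero _)
  · exact h

lemma prime_of_linear {α : MvPolynomial (Fin 3) ℝ} (h0 : α ≠ 0) (h : α.IsHomogeneous 1) :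
    Prime α := by
  apply Irreducible.prime
  apply irreducible_of_totalDegree_eq_one (h.totalDegree h0)
  intro x hx
  obtain ⟨m, hm⟩ := exists_coeff_ne_zero h0
  have := hx m
  rw [isUnit_iff_ne_zero]
  rintro rfl
  exact hm (zero_dvd_iff.mp this)

lemma applyDer_mul (θ : Fin 3 → MvPolynomial (Fin 3) ℝ) (f g : MvPolynomial (Fin 3) ℝ) :
    applyDer θ (f * g) = applyDer θ f * g + f * applyDer θ g := by
  simp only [applyDer, Fin.sum_univ_three, pderiv_mul]
  ring

lemma dvd_applyDer {A : Finset (MvPolynomial (Fin 3) ℝ)} (hA : IsArrangement A)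
    {θ : Fin 3 → MvPolynomial (Fin 3) ℝ} (hθ : applyDer θ (Qpoly A) = 0)
    {α : MvPolynomial (Fin 3) ℝ} (hα : α ∈ A) : α ∣ applyDer θ α := by
  have hp := prime_of_linear (hA.1 α hα).1 (hA.1 α hα).2
  rw [Qpoly, ← Finset.mul_prod_erase A _ hα, applyDer_mul] at hθ
  have h1 : α ∣ applyDer θ α * ∏ x ∈ A.erase α, x :=
    ⟨-applyDer θ (∏ x ∈ A.erase α, x), by linear_combination hθ⟩
  rcases hp.dvd_or_dvd h1 with h | h
  · exact h
  · exfalso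
    obtain ⟨β, hβ, hd⟩ := (hp.dvd_finsetProd_iff _).1 h
    obtain ⟨hne, hβA⟩ := Finset.mem_erase.1 hβ
    obtain ⟨q, hq⟩ := hd
    have hβ0 := (hA.1 β hβA).1
    have hq0 : q ≠ 0 := by rintro rfl; simp at hq; exact hβ0 hq
    have hdeg := (hA.1 β hβA).2.totalDegree hβ0
    rw [hq, totalDegree_mul_of_isDomain (hA.1 α hα).1 hq0,
      (hA.1 α hα).2.totalDegree (hA.1 α hα).1] at hdeg
    have hq1 : q.totalDegree = 0 := by omega
    rw [totalDegree_eq_zero_iff_eq_C] at hq1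
    refine hA.2 β hβA α hα hne (coeff 0 q) ?_
    rw [hq, smul_eq_C_mul, ← hq1, mul_comm]

/-! ### The arrangement -/

/-- The index set of the lines of the arrangement. -/
abbrev LIdx (n k : ℕ) := Unit ⊕ (Fin n ⊕ (Fin n ⊕ Fin k))

/-- The lines `z = 0`, `x = i z`, `y = i z` (`i < n`) and `x + y = (n + j) z` (`j < k`). -/
noncomputable def lin (n k : ℕ) : LIdx n k → MvPolynomial (Fin 3) ℝ
  | .inl _ => X 2
  | .inr (.inl i) => X 0 - C (i.val : ℝ) * X 2
  | .inr (.inr (.inl i)) => X 1 - C (i.val : ℝ) * X 2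
  | .inr (.inr (.inr j)) => X 0 + X 1 - C ((n : ℝ) + (j.val : ℝ)) * X 2

lemma lin_prop {n k : ℕ} {a b : LIdx n k} {c : ℝ} (h : lin n k a = c • lin n k b) : a = b := by
  have h0 := congrArg (eval ![1, 0, 0]) h
  have h1 := congrArg (eval ![0, 1, 0]) h
  have h2 := congrArg (eval ![0, 0, 1]) h
  rcases a with a | a | a | a <;> rcases b with b | b | b | b <;>
    simp [lin, smul_eval] at h0 h1 h2 ⊢ <;>
    first
    | (exfalso; linarith)
    | (subst h0; simp at h2; done)
    | (subst h1; simp at h2; done)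
    | (subst h0; simp [Fin.ext_iff] at *; omega)
    | (subst h1; simp [Fin.ext_iff] at *; omega)

lemma lin_injective (n k : ℕ) : Function.Injective (lin n k) := by
  intro a b h
  exact lin_prop (c := 1) (by simpa using h)

lemma lin_homog (n k : ℕ) (a : LIdx n k) : (lin n k a).IsHomogeneous 1 := by
  have hc : ∀ c : ℝ, (C c * X 2 : MvPolynomial (Fin 3) ℝ).IsHomogeneous 1 :=
    fun c => isHomogeneous_C_mul_X c 2
  rcases a with a | a | a | a
  · exact isHomogeneous_X _ _
  · exact (isHomogeneous_X _ _).sub (hc _)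
  · exact (isHomogeneous_X _ _).sub (hc _)
  · exact ((isHomogeneous_X _ _).add (isHomogeneous_X _ _)).sub (hc _)

lemma lin_ne_zero (n k : ℕ) (a : LIdx n k) : lin n k a ≠ 0 := by
  intro h
  have h0 := congrArg (eval ![1, 0, 0]) h
  have h1 := congrArg (eval ![0, 1, 0]) h
  have h2 := congrArg (eval ![0, 0, 1]) h
  rcases a with a | a | a | a <;> simp [lin] at h0 h1 h2

/-- The arrangement. -/
noncomputable def arr (n k : ℕ) : Finset (MvPolynomial (Fin 3) ℝ) :=
  Finset.univ.image (lin n k)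

lemma mem_arr {n k : ℕ} (a : LIdx n k) : lin n k a ∈ arr n k :=
  Finset.mem_image_of_mem _ (Finset.mem_univ _)

lemma arr_isArrangement (n k : ℕ) : IsArrangement (arr n k) := by
  constructor
  · intro α hα
    obtain ⟨a, -, rfl⟩ := Finset.mem_image.1 hα
    exact ⟨lin_ne_zero _ _ _, lin_homog _ _ _⟩
  · intro α hα β hβ hne c h
    obtain ⟨a, -, rfl⟩ := Finset.mem_image.1 hα
    obtain ⟨b, -, rfl⟩ := Finset.mem_image.1 hβ
    exact hne (by rw [lin_prop h])

lemma arr_isEssential {n k : ℕ} (hn : 0 < n) : IsEssential (arr n k) := by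
  intro v hv
  have h2 := hv _ (mem_arr (.inl ()))
  have h0 := hv _ (mem_arr (.inr (.inl ⟨0, hn⟩)))
  have h1 := hv _ (mem_arr (.inr (.inr (.inl ⟨0, hn⟩))))
  simp [lin] at h0 h1 h2
  funext i
  fin_cases i <;> simp [h0, h1, h2]

lemma arr_card (n k : ℕ) : (arr n k).card = 2 * n + 1 + k := by
  rw [arr, Finset.card_image_of_injective _ (lin_injective n k)]
  simp
  ring

lemma Qpoly_arr (n k : ℕ) : Qpoly (arr n k) = ∏ a, lin n k a := by
  rw [Qpoly, arr, Finset.prod_image]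
  intro a _ b _ h
  exact lin_injective _ _ h

lemma Qpoly_arr_homog (n k : ℕ) : (Qpoly (arr n k)).IsHomogeneous (2 * n + 1 + k) := by
  rw [Qpoly_arr]
  convert! IsHomogeneous.prod Finset.univ (lin n k) (fun _ => 1) (fun a _ => lin_homog n k a) using 1
  simp
  ring

lemma Qpoly_arr_ne_zero (n k : ℕ) : Qpoly (arr n k) ≠ 0 := by
  rw [Qpoly_arr]
  exact Finset.prod_ne_zero_iff.2 fun a _ => lin_ne_zero n k a

lemma euler_arr (n k : ℕ) :
    X 0 * pderiv 0 (Qpoly (arr n k)) + X 1 * pderiv 1 (Qpoly (arr n k))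
      + X 2 * pderiv 2 (Qpoly (arr n k)) =
      ((2 * n + 1 + k : ℕ) : MvPolynomial (Fin 3) ℝ) * Qpoly (arr n k) := by
  have := (Qpoly_arr_homog n k).sum_X_mul_pderiv
  rw [Fin.sum_univ_three, nsmul_eq_mul] at this
  exact this

/-- Existence of a Jacobian relation of degree `n + k`. -/
lemma exists_relation (n k : ℕ) : ∃ θ : Fin 3 → MvPolynomial (Fin 3) ℝ, θ ≠ 0 ∧
    (∀ j, (θ j).IsHomogeneous (n + k)) ∧ applyDer θ (Qpoly (arr n k)) = 0 := by
  set P : MvPolynomial (Fin 3) ℝ := (∏ i : Fin n, lin n k (.inr (.inl i))) *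
    ∏ j : Fin k, lin n k (.inr (.inr (.inr j))) with hP
  set R : MvPolynomial (Fin 3) ℝ := X 2 * ∏ i : Fin n, lin n k (.inr (.inr (.inl i))) with hR
  have hQ : Qpoly (arr n k) = P * R := by
    rw [Qpoly_arr, Fintype.prod_sum_type, Fintype.prod_sum_type, Fintype.prod_sum_type, hP, hR]
    simp [lin]
    ring
  have hP0 : P ≠ 0 := mul_ne_zero (Finset.prod_ne_zero_iff.2 fun a _ => lin_ne_zero n k _)
    (Finset.prod_ne_zero_iff.2 fun a _ => lin_ne_zero n k _)
  have hPh : P.IsHomogeneous (n + k) := by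
    have h1 := IsHomogeneous.prod Finset.univ (fun i : Fin n => lin n k (.inr (.inl i)))
      (fun _ => 1) (fun a _ => lin_homog n k _)
    have h2 := IsHomogeneous.prod Finset.univ (fun i : Fin k => lin n k (.inr (.inr (.inr i))))
      (fun _ => 1) (fun a _ => lin_homog n k _)
    simpa using h1.mul h2
  have hprod : pderiv 0 (∏ i : Fin n, lin n k (.inr (.inr (.inl i)))) = 0 := by
    apply Finset.prod_induction _ (fun p => pderiv 0 p = 0)
    · intro a b ha hb
      rw [pderiv_mul, ha, hb]
      ring
    · simp
    · intro i _
      simp [lin, pderiv_X]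
  have hR0 : pderiv 0 R = 0 := by
    rw [hR, pderiv_mul, hprod]
    simp [pderiv_X]
  have hQ0 : pderiv 0 (Qpoly (arr n k)) = pderiv 0 P * R := by
    rw [hQ, pderiv_mul, hR0]; ring
  set N : ℕ := 2 * n + 1 + k with hN
  have hE := euler_arr n k
  rw [← hN] at hE
  set h : MvPolynomial (Fin 3) ℝ := pderiv 0 P with hh
  have hXh : ∀ j, (h * X j).IsHomogeneous (n + k) := by
    intro j
    rcases Nat.eq_zero_or_pos (n + k) with h0 | h0
    · have : h = 0 := by
        rw [h0, ← totalDegree_zero_iff_isHomogeneous, totalDegree_eq_zero_iff_eq_C] at hPh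
        rw [hh, hPh, pderiv_C]
      rw [this, zero_mul]
      exact isHomogeneous_zero _ _ _
    · have := (hPh.pderiv (i := 0)).mul (isHomogeneous_X ℝ j)
      rwa [Nat.sub_add_cancel h0] at this
  have hNP : ((N : MvPolynomial (Fin 3) ℝ) * P).IsHomogeneous (n + k) := by
    have := hPh.C_mul (N : ℝ)
    simpa using this
  refine ⟨![(N : MvPolynomial (Fin 3) ℝ) * P - h * X 0, -(h * X 1), -(h * X 2)], ?_, ?_, ?_⟩
  · intro h0
    have h2 := congrFun h0 2
    have h1 := congrFun h0 0
    simp at h1 h2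
    rw [h2] at h1
    simp [hP0] at h1
    norm_cast at h1
    omega
  · intro j
    fin_cases j
    · exact hNP.sub (hXh 0)
    · exact (hXh 1).neg
    · exact (hXh 2).neg
  · simp only [applyDer, Fin.sum_univ_three]
    simp
    rw [hQ0] at hE ⊢
    rw [hQ] at hE ⊢
    linear_combination (-h) * hE

/-- There is no Jacobian relation of degree less than `n + k`. -/
lemma no_relation {n k e : ℕ} (hkn : k ≤ n) (he : e < n + k)
    {θ : Fin 3 → MvPolynomial (Fin 3) ℝ} (hθ : ∀ j, (θ j).IsHomogeneous e)
    (h : applyDer θ (Qpoly (arr n k)) = 0) : θ = 0 := by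
  have hd : ∀ a, lin n k a ∣ applyDer θ (lin n k a) := fun a =>
    dvd_applyDer (arr_isArrangement n k) h (mem_arr a)
  have hz : X 2 ∣ θ 2 := by
    have := hd (.inl ())
    simpa [lin, applyDer, Fin.sum_univ_three, pderiv_X] using this
  obtain ⟨g, hg⟩ := hz
  have hev : ∀ a, ∀ v, eval v (lin n k a) = 0 → eval v (applyDer θ (lin n k a)) = 0 := by
    intro a v hv
    obtain ⟨q, hq⟩ := hd a
    rw [hq, map_mul, hv, zero_mul]
  have hA : (θ 0 - g * X 0).IsHomogeneous e := by
    apply homog_of_X_mul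
    have : X 2 * (θ 0 - g * X 0) = X 2 * θ 0 - X 0 * θ 2 := by rw [hg]; ring
    rw [this, add_comm]
    exact ((isHomogeneous_X _ _).mul (hθ 0)).sub ((isHomogeneous_X _ _).mul (hθ 2))
  have hB : (θ 1 - g * X 1).IsHomogeneous e := by
    apply homog_of_X_mul
    have : X 2 * (θ 1 - g * X 1) = X 2 * θ 1 - X 1 * θ 2 := by rw [hg]; ring
    rw [this, add_comm]
    exact ((isHomogeneous_X _ _).mul (hθ 1)).sub ((isHomogeneous_X _ _).mul (hθ 2))
  have eX : ∀ t s : ℕ, t < n → eval ![(t : ℝ), s, 1] (θ 0 - g * X 0) = 0 := by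
    intro t s ht
    have := hev (.inr (.inl ⟨t, ht⟩)) ![(t : ℝ), s, 1] (by simp [lin])
    simp [lin, applyDer, Fin.sum_univ_three, pderiv_X, hg] at this ⊢
    linear_combination this
  have eY : ∀ t s : ℕ, s < n → eval ![(t : ℝ), s, 1] (θ 1 - g * X 1) = 0 := by
    intro t s ht
    have := hev (.inr (.inr (.inl ⟨s, ht⟩))) ![(t : ℝ), s, 1] (by simp [lin])
    simp [lin, applyDer, Fin.sum_univ_three, pderiv_X, hg] at this ⊢
    linear_combination this
  have eD : ∀ t s : ℕ, n ≤ t + s → t + s < n + k →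
      eval ![(t : ℝ), s, 1] (θ 0 - g * X 0) + eval ![(t : ℝ), s, 1] (θ 1 - g * X 1) = 0 := by
    intro t s h1 h2
    obtain ⟨j, hj⟩ := Nat.exists_eq_add_of_le h1
    have hjr : (t : ℝ) + s = n + j := by exact_mod_cast hj
    have := hev (.inr (.inr (.inr ⟨j, by omega⟩))) ![(t : ℝ), s, 1] (by simp [lin]; linarith)
    simp [lin, applyDer, Fin.sum_univ_three, pderiv_X, hg] at this ⊢
    linear_combination this - (eval ![(t : ℝ), s, 1] g) * hjr
  have hA0 : θ 0 - g * X 0 = 0 := by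
    apply lattice_zero hA
    intro t s hts
    by_cases ht : t < n
    · exact eX t s ht
    · have h1 := eD t s (by omega) (by omega)
      rwa [eY t s (by omega), add_zero] at h1
  have hB0 : θ 1 - g * X 1 = 0 := by
    apply lattice_zero hB
    intro t s hts
    by_cases ht : s < n
    · exact eY t s ht
    · have h1 := eD t s (by omega) (by omega)
      rwa [eX t s (by omega), zero_add] at h1
  have h0 : θ 0 = g * X 0 := sub_eq_zero.1 hA0
  have h1 : θ 1 = g * X 1 := sub_eq_zero.1 hB0
  have hg0 : g = 0 := by
    rw [applyDer, Fin.sum_univ_three, h0, h1, hg] at h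
    have h3 : g * (((2 * n + 1 + k : ℕ) : MvPolynomial (Fin 3) ℝ) * Qpoly (arr n k)) = 0 := by
      rw [← euler_arr, ← h]; ring
    rcases mul_eq_zero.1 h3 with h4 | h4
    · exact h4
    · rcases mul_eq_zero.1 h4 with h5 | h5
      · norm_cast at h5
        omega
      · exact absurd h5 (Qpoly_arr_ne_zero n k)
  funext j
  fin_cases j
  · simp [h0, hg0]
  · simp [h1, hg0]
  · simp [hg, hg0]

lemma mdr_arr {n k : ℕ} (hkn : k ≤ n) : mdr (arr n k) = n + k := by
  apply le_antisymm
  · exact Nat.sInf_le (exists_relation n k)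
  · refine le_csInf ⟨_, exists_relation n k⟩ ?_
    rintro e ⟨θ, hne, hh, h0⟩
    by_contra hlt
    exact hne (no_relation hkn (not_le.1 hlt) hh h0)

/-! ### The global Tjurina number -/

/-- The lines of `A` through `v`. -/
noncomputable def through (A : Finset (MvPolynomial (Fin 3) ℝ)) (v : Fin 3 → ℝ) :
    Finset (MvPolynomial (Fin 3) ℝ) := A.filter (fun α => eval v α = 0)

lemma tjurina_eq {J : Type} (A : Finset (MvPolynomial (Fin 3) ℝ)) (P : Finset J)
    (p : J → Fin 3 → ℝ) (h0 : ∀ a ∈ P, p a ≠ 0) (h2 : ∀ a ∈ P, 2 ≤ (through A (p a)).card)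
    (hinj : ∀ a ∈ P, ∀ b ∈ P, through A (p a) = through A (p b) → a = b)
    (hsurj : ∀ v, v ≠ 0 → 2 ≤ (through A v).card → ∃ a ∈ P, through A (p a) = through A v) :
    tjurina A = ∑ a ∈ P, ((through A (p a)).card - 1) ^ 2 := by
  have key : ∀ j, nPoints A j = (P.filter (fun a => (through A (p a)).card = j)).card := by
    intro j
    rw [← Finset.card_image_of_injOn (f := fun a => through A (p a)), ← Set.ncard_coe_finset,
      nPoints]
    · congr 1
      ext T
      simp only [Set.mem_ofPred_eq, Finset.coe_image, Set.mem_image, Finset.mem_coe,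
        Finset.mem_filter]
      constructor
      · rintro ⟨v, hv, hT, hc, hj⟩
        have hT' : T = through A v := hT
        subst hT'
        obtain ⟨a, ha, hav⟩ := hsurj v hv hc
        exact ⟨a, ⟨ha, by rw [hav]; exact hj⟩, hav⟩
      · rintro ⟨a, ⟨ha, hj⟩, rfl⟩
        exact ⟨p a, h0 a ha, rfl, h2 a ha, hj⟩
    · intro a ha b hb hab
      exact hinj a (Finset.mem_filter.1 ha).1 b (Finset.mem_filter.1 hb).1 hab
  rw [tjurina, ← Finset.sum_fiberwise_of_maps_to (s := P) (t := Finset.range (A.card + 1))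
    (g := fun a => (through A (p a)).card)]
  · apply Finset.sum_congr rfl
    intro j _
    rw [key, ← smul_eq_mul, ← Finset.sum_const]
    apply Finset.sum_congr rfl
    intro a ha
    rw [(Finset.mem_filter.1 ha).2]
  · intro a _
    rw [Finset.mem_range]
    exact Nat.lt_succ_of_le (Finset.card_le_card (Finset.filter_subset _ _))

lemma through_arr_card (n k : ℕ) (v : Fin 3 → ℝ) : (through (arr n k) v).card =
    ∑ a, if eval v (lin n k a) = 0 then 1 else 0 := by
  rw [through, arr, Finset.filter_image, Finset.card_image_of_injective _ (lin_injective n k),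
    Finset.card_filter]

lemma through_eq {n k : ℕ} {v w : Fin 3 → ℝ} (h : through (arr n k) v = through (arr n k) w)
    (a : LIdx n k) : eval v (lin n k a) = 0 ↔ eval w (lin n k a) = 0 := by
  have h1 : lin n k a ∈ through (arr n k) v ↔ lin n k a ∈ through (arr n k) w := by rw [h]
  simpa [through, mem_arr] using h1

lemma through_congr {n k : ℕ} {v w : Fin 3 → ℝ}
    (h : ∀ a, eval v (lin n k a) = 0 ↔ eval w (lin n k a) = 0) :
    through (arr n k) v = through (arr n k) w := by
  apply Finset.filter_congr
  intro α hα
  obtain ⟨a, -, rfl⟩ := Finset.mem_image.1 hα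
  exact h a

lemma eval_lin_smul (n k : ℕ) (a : LIdx n k) (c : ℝ) (v : Fin 3 → ℝ) :
    eval (c • v) (lin n k a) = c * eval v (lin n k a) := by
  rcases a with a | a | a | a <;> simp [lin] <;> ring

lemma through_smul {n k : ℕ} {c : ℝ} (hc : c ≠ 0) (v : Fin 3 → ℝ) :
    through (arr n k) (c • v) = through (arr n k) v := by
  apply through_congr
  intro a
  rw [eval_lin_smul]
  simp [hc]

/-- The three points at infinity, and the affine integral points. -/
noncomputable def pt : Fin 3 ⊕ (ℕ × ℕ) → Fin 3 → ℝ
  | .inl 0 => ![1, 0, 0]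
  | .inl 1 => ![0, 1, 0]
  | .inl 2 => ![1, -1, 0]
  | .inr q => ![(q.1 : ℝ), q.2, 1]

/-- The multiplicity of an affine integral point. -/
def mm (n k x y : ℕ) : ℕ :=
  (if x < n then 1 else 0) + (if y < n then 1 else 0) + (if n ≤ x + y ∧ x + y < n + k then 1 else 0)

lemma sum_ind (n x : ℕ) : (∑ i : Fin n, if x = i.val then 1 else 0) = if x < n then 1 else 0 := by
  rw [Fin.sum_univ_eq_sum_range (fun i => if x = i then 1 else 0) n, Finset.sum_ite_eq]
  simp

lemma through_aff (n k x y : ℕ) : (through (arr n k) (pt (.inr (x, y)))).card = mm n k x y := by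
  rw [through_arr_card, Fintype.sum_sum_type, Fintype.sum_sum_type, Fintype.sum_sum_type, mm]
  have h1 : ∀ z i : ℕ, (z : ℝ) - i = 0 ↔ z = i := by
    intro z i; rw [sub_eq_zero]; norm_cast
  have h2 : ∀ j : ℕ, (x : ℝ) + y - (n + j) = 0 ↔ x + y = n + j := by
    intro i; rw [sub_eq_zero]; norm_cast
  simp only [lin, pt, map_sub, map_add, map_mul, eval_X, eval_C, Matrix.cons_val_zero,
    Matrix.cons_val_one, Matrix.cons_val, mul_one, h1, h2, sum_ind]
  have h3 : (∑ j : Fin k, if x + y = n + j.val then 1 else 0) =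
      if n ≤ x + y ∧ x + y < n + k then 1 else 0 := by
    by_cases hn : n ≤ x + y
    · obtain ⟨j, hj⟩ := Nat.exists_eq_add_of_le hn
      rw [hj]
      simp only [Nat.add_left_cancel_iff, sum_ind]
      simp
    · rw [if_neg (by omega)]
      apply Finset.sum_eq_zero
      intro j _
      rw [if_neg (by omega)]
  rw [h3]
  simp
  ring

lemma through_inf (n k : ℕ) : (through (arr n k) (pt (.inl 0))).card = n + 1 ∧
    (through (arr n k) (pt (.inl 1))).card = n + 1 ∧
    (through (arr n k) (pt (.inl 2))).card = k + 1 := by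
  refine ⟨?_, ?_, ?_⟩ <;>
  · rw [through_arr_card, Fintype.sum_sum_type, Fintype.sum_sum_type, Fintype.sum_sum_type]
    simp [lin, pt, add_comm]

/-- The indices of the multiple points. -/
def pts (n k : ℕ) : Finset (Fin 3 ⊕ (ℕ × ℕ)) :=
  Finset.univ.disjSum
    ((Finset.range (n + k) ×ˢ Finset.range (n + k)).filter (fun q => 2 ≤ mm n k q.1 q.2))

lemma exists_two {n k : ℕ} {v : Fin 3 → ℝ} (h : 2 ≤ (through (arr n k) v).card) :
    ∃ a b, a ≠ b ∧ eval v (lin n k a) = 0 ∧ eval v (lin n k b) = 0 := by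
  obtain ⟨α, hα, β, hβ, hne⟩ := Finset.one_lt_card.1 h
  rw [through, Finset.mem_filter] at hα hβ
  obtain ⟨a, -, rfl⟩ := Finset.mem_image.1 hα.1
  obtain ⟨b, -, rfl⟩ := Finset.mem_image.1 hβ.1
  exact ⟨a, b, fun h => hne (by rw [h]), hα.2, hβ.2⟩

lemma integral_point {n k : ℕ} {x y : ℝ} {a b : LIdx n k} (hab : a ≠ b)
    (ha : eval ![x, y, 1] (lin n k a) = 0) (hb : eval ![x, y, 1] (lin n k b) = 0) :
    ∃ t s : ℕ, x = t ∧ y = s ∧ t < n + k ∧ s < n + k := by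
  have hXY : ∀ i j : Fin n, x - i = 0 → y - j = 0 →
      ∃ t s : ℕ, x = t ∧ y = s ∧ t < n + k ∧ s < n + k := fun i j h1 h2 =>
    ⟨i, j, by linarith, by linarith, by omega, by omega⟩
  have hXD : ∀ (i : Fin n) (j : Fin k), x - i = 0 → x + y - (n + j) = 0 →
      ∃ t s : ℕ, x = t ∧ y = s ∧ t < n + k ∧ s < n + k := fun i j h1 h2 =>
    ⟨i, n + j - i, by linarith, by
      rw [Nat.cast_sub (by omega)]; push_cast; linarith, by omega, by omega⟩
  have hYD : ∀ (i : Fin n) (j : Fin k), y - i = 0 → x + y - (n + j) = 0 →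
      ∃ t s : ℕ, x = t ∧ y = s ∧ t < n + k ∧ s < n + k := fun i j h1 h2 =>
    ⟨n + j - i, i, by
      rw [Nat.cast_sub (by omega)]; push_cast; linarith, by linarith, by omega, by omega⟩
  have hne : ∀ (m : ℕ) (i j : Fin m) (z : ℝ), z - i = 0 → z - j = 0 → i = j := by
    intro m i j z h1 h2
    have : (i.val : ℝ) = j.val := by linarith
    exact Fin.ext (by exact_mod_cast this)
  rcases a with a | a | a | a <;> rcases b with b | b | b | b <;>
    simp only [lin, map_sub, map_add, map_mul, eval_X, eval_C, Matrix.cons_val_zero,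
    Matrix.cons_val_one, Matrix.cons_val, mul_one, one_ne_zero] at ha hb
  · exact absurd (by rw [hne _ _ _ _ ha hb]) hab
  · exact hXY _ _ ha hb
  · exact hXD _ _ ha hb
  · exact hXY _ _ hb ha
  · exact absurd (by rw [hne _ _ _ _ ha hb]) hab
  · exact hYD _ _ ha hb
  · exact hXD _ _ hb ha
  · exact hYD _ _ hb ha
  · exact absurd (by rw [hne _ a b (x + y - n) (by linarith) (by linarith)]) hab

lemma pts_surj {n k : ℕ} (v : Fin 3 → ℝ) (hv : v ≠ 0) (h : 2 ≤ (through (arr n k) v).card) :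
    ∃ a ∈ pts n k, through (arr n k) (pt a) = through (arr n k) v := by
  obtain ⟨a, b, hab, ha, hb⟩ := exists_two h
  by_cases hz : v 2 = 0
  · have hc : ∃ c, c ≠ Sum.inl () ∧ eval v (lin n k c) = 0 := by
      by_cases h1 : a = Sum.inl ()
      · exact ⟨b, fun h2 => hab (h1.trans h2.symm), hb⟩
      · exact ⟨a, h1, ha⟩
    obtain ⟨c, hc, hcv⟩ := hc
    have fin : ∀ (i : Fin 3) (e : ℝ), v = e • pt (.inl i) →
        ∃ a ∈ pts n k, through (arr n k) (pt a) = through (arr n k) v := by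
      intro i e he
      refine ⟨.inl i, by simp [pts], ?_⟩
      have he0 : e ≠ 0 := by
        rintro rfl
        exact hv (by rw [he, zero_smul])
      rw [he, through_smul he0]
    rcases c with c | c | c | c
    · exact absurd rfl hc
    · simp [lin, hz] at hcv
      apply fin 1 (v 1)
      funext i; fin_cases i <;> simp [pt, hz, hcv]
    · simp [lin, hz] at hcv
      apply fin 0 (v 0)
      funext i; fin_cases i <;> simp [pt, hz, hcv]
    · simp [lin, hz] at hcv
      apply fin 2 (v 0)
      funext i; fin_cases i <;> simp [pt, hz]
      linarith
  · have hv' : v = v 2 • ![v 0 / v 2, v 1 / v 2, 1] := by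
      funext i
      fin_cases i <;> simp <;> field_simp
    rw [hv', eval_lin_smul] at ha hb
    have ha' := (mul_eq_zero.1 ha).resolve_left hz
    have hb' := (mul_eq_zero.1 hb).resolve_left hz
    obtain ⟨t, s, ht, hs, h1, h2⟩ := integral_point hab ha' hb'
    have hT : through (arr n k) v = through (arr n k) (pt (.inr (t, s))) := by
      rw [hv', through_smul hz, ht, hs]
      rfl
    refine ⟨.inr (t, s), ?_, hT.symm⟩
    rw [hT, through_aff] at h
    simp [pts, h1, h2, h]

lemma pts_inj {n k : ℕ} (hn : 0 < n) (a b : Fin 3 ⊕ (ℕ × ℕ)) (ha : a ∈ pts n k) (hb : b ∈ pts n k)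
    (h : through (arr n k) (pt a) = through (arr n k) (pt b)) : a = b := by
  have h' := through_eq h
  have hz := h' (.inl ())
  have hx := h' (.inr (.inl ⟨0, hn⟩))
  have hy := h' (.inr (.inr (.inl ⟨0, hn⟩)))
  rcases a with a | a <;> rcases b with b | b
  · fin_cases a <;> fin_cases b <;> simp [lin, pt] at hx hy ⊢
  · fin_cases a <;> simp [lin, pt] at hz
  · fin_cases b <;> simp [lin, pt] at hz
  · obtain ⟨x, y⟩ := a
    obtain ⟨x', y'⟩ := b
    have hX : x < n → x = x' := by
      intro hlt
      have := (h' (.inr (.inl ⟨x, hlt⟩))).1 (by simp [lin, pt])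
      simp [lin, pt, sub_eq_zero] at this
      exact this.symm
    have hY : y < n → y = y' := by
      intro hlt
      have := (h' (.inr (.inr (.inl ⟨y, hlt⟩)))).1 (by simp [lin, pt])
      simp [lin, pt, sub_eq_zero] at this
      exact this.symm
    have hD : n ≤ x + y → x + y < n + k → x + y = x' + y' := by
      intro h1 h2
      obtain ⟨j, hj⟩ := Nat.exists_eq_add_of_le h1
      have hjr : (x : ℝ) + y = n + j := by exact_mod_cast hj
      have := (h' (.inr (.inr (.inr ⟨j, by omega⟩)))).1 (by simp [lin, pt]; linarith)
      simp [lin, pt, sub_eq_zero] at this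
      rw [← hjr] at this
      exact_mod_cast this.symm
    rw [pts, Finset.inr_mem_disjSum, Finset.mem_filter] at ha
    have h2 := ha.2
    simp only [mm] at h2
    simp only [Sum.inr.injEq, Prod.mk.injEq]
    split_ifs at h2 <;> omega

lemma count_XY (n k : ℕ) : ((Finset.range (n + k) ×ˢ Finset.range (n + k)).filter
    (fun q => q.1 < n ∧ q.2 < n)).card = n * n := by
  have : (Finset.range (n + k) ×ˢ Finset.range (n + k)).filter
    (fun q => q.1 < n ∧ q.2 < n) = Finset.range n ×ˢ Finset.range n := by
    ext ⟨x, y⟩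
    simp
    omega
  rw [this]
  simp

lemma count_XD (n k : ℕ) : ((Finset.range (n + k) ×ˢ Finset.range (n + k)).filter
    (fun q => q.1 < n ∧ n ≤ q.1 + q.2 ∧ q.1 + q.2 < n + k)).card = n * k := by
  have : (Finset.range n ×ˢ Finset.range k).card = n * k := by simp
  rw [← this]
  apply Finset.card_nbij' (fun q => (q.1, q.1 + q.2 - n)) (fun q => (q.1, n + q.2 - q.1))
  all_goals
    rintro ⟨x, y⟩ h
    simp at h ⊢
    omega

lemma count_YD (n k : ℕ) : ((Finset.range (n + k) ×ˢ Finset.range (n + k)).filter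
    (fun q => q.2 < n ∧ n ≤ q.1 + q.2 ∧ q.1 + q.2 < n + k)).card = n * k := by
  have : (Finset.range n ×ˢ Finset.range k).card = n * k := by simp
  rw [← this]
  apply Finset.card_nbij' (fun q => (q.2, q.1 + q.2 - n)) (fun q => (n + q.2 - q.1, q.1))
  all_goals
    rintro ⟨x, y⟩ h
    simp at h ⊢
    omega

lemma count_XYD (n k : ℕ) : ((Finset.range (n + k) ×ˢ Finset.range (n + k)).filter
    (fun q => q.1 < n ∧ q.2 < n ∧ n ≤ q.1 + q.2 ∧ q.1 + q.2 < n + k)).card =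
      ∑ j ∈ Finset.range k, (n - 1 - j) := by
  have : ((Finset.range k).sigma (fun j => Finset.range (n - 1 - j))).card =
      ∑ j ∈ Finset.range k, (n - 1 - j) := by simp [Finset.card_sigma]
  rw [← this]
  apply Finset.card_nbij' (fun q => ⟨q.1 + q.2 - n, n - 1 - q.2⟩)
    (fun q => (q.2 + q.1 + 1, n - 1 - q.2))
  · rintro ⟨x, y⟩ h
    simp at h ⊢
    omega
  · rintro ⟨x, y⟩ h
    simp at h ⊢
    omega
  · rintro ⟨x, y⟩ h
    simp at h ⊢
    omega
  · rintro ⟨x, y⟩ h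
    simp at h ⊢
    omega

lemma sum_closed {n k : ℕ} (h : k ≤ n) :
    2 * (∑ j ∈ Finset.range k, (n - 1 - j)) + k * (k + 1) = 2 * (n * k) := by
  induction k with
  | zero => simp
  | succ k ih =>
    have ih := ih (by omega)
    rw [Finset.sum_range_succ]
    have : n - 1 - k + (k + 1) = n := by omega
    nlinarith

lemma tjurina_arr {n k : ℕ} (hk : 0 < k) (hkn : k ≤ n) :
    tjurina (arr n k) = 3 * (n * n) + k * k + 2 * (n * k) + ∑ j ∈ Finset.range k, (n - 1 - j) := by
  obtain ⟨i0, i1, i2⟩ := through_inf n k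
  rw [tjurina_eq (arr n k) (pts n k) pt]
  · rw [pts, Finset.sum_disjSum, Fin.sum_univ_three, i0, i1, i2]
    have : ∀ q ∈ (Finset.range (n + k) ×ˢ Finset.range (n + k)),
        (if 2 ≤ mm n k q.1 q.2 then ((through (arr n k) (pt (.inr q))).card - 1) ^ 2 else 0) =
        (if q.1 < n ∧ q.2 < n then 1 else 0) +
        (if q.1 < n ∧ n ≤ q.1 + q.2 ∧ q.1 + q.2 < n + k then 1 else 0) +
        (if q.2 < n ∧ n ≤ q.1 + q.2 ∧ q.1 + q.2 < n + k then 1 else 0) +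
        (if q.1 < n ∧ q.2 < n ∧ n ≤ q.1 + q.2 ∧ q.1 + q.2 < n + k then 1 else 0) := by
      rintro ⟨x, y⟩ -
      rw [through_aff]
      simp only [mm]
      by_cases h1 : x < n <;> by_cases h2 : y < n <;>
        by_cases h3 : n ≤ x + y ∧ x + y < n + k <;> simp [h1, h2, h3]
    rw [Finset.sum_filter, Finset.sum_congr rfl this, Finset.sum_add_distrib,
      Finset.sum_add_distrib, Finset.sum_add_distrib, ← Finset.card_filter, ← Finset.card_filter,
      ← Finset.card_filter, ← Finset.card_filter, count_XY, count_XD, count_YD, count_XYD]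
    simp only [Nat.add_sub_cancel]
    ring
  · intro a _ h
    rcases a with a | a
    · fin_cases a
      · simpa [pt] using congrFun h 0
      · simpa [pt] using congrFun h 1
      · simpa [pt] using congrFun h 0
    · simpa [pt] using congrFun h 2
  · intro a ha
    rcases a with a | ⟨x, y⟩
    · fin_cases a
      · exact i0.ge.trans' (by omega)
      · exact i1.ge.trans' (by omega)
      · exact i2.ge.trans' (by omega)
    · rw [through_aff]
      simp [pts] at ha
      exact ha.2
  · exact fun a ha b hb h => pts_inj (by omega) a b ha hb h
  · exact fun v hv h => pts_surj v hv h

/-- For every pair of integers `(d, r)` with `d ≥ 4` and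
`d/2 ≤ r ≤ 2(d−1)/3` (i.e. `2r ≥ d` and `3r ≤ 2(d−1)`), there exists a line
arrangement `A` of `d` lines in the real projective plane which is maximal Tjurina of
type `(d, r)`. -/
theorem exists_maxTjurina_real (d r : ℕ) (hd : 4 ≤ d)
    (h1 : d ≤ 2 * r) (h2 : 3 * r ≤ 2 * (d - 1)) :
    ∃ A : Finset (MvPolynomial (Fin 3) ℝ),
      IsArrangement A ∧ IsEssential A ∧ IsMaxTjurina A d r := by
  obtain ⟨n, k, rfl, rfl, hk, hkn⟩ : ∃ n k : ℕ, d = 2 * n + 1 + k ∧ r = n + k ∧ 0 < k ∧ k ≤ n :=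
    ⟨d - r - 1, 2 * r + 1 - d, by omega, by omega, by omega, by omega⟩
  refine ⟨arr n k, arr_isArrangement n k, arr_isEssential (by omega), arr_card n k,
    mdr_arr hkn, ?_⟩
  rw [tjurina_arr hk hkn, tauMax]
  have e1 : 2 * n + 1 + k - 1 = 2 * n + k := by omega
  have e2 : 2 * n + 1 + k - (n + k) - 1 = n := by omega
  have e3 : 2 * (n + k) - (2 * n + 1 + k) + 2 = k + 1 := by omega
  rw [e1, e2, e3]
  have h3 := sum_closed hkn
  have h4 : 2 * Nat.choose (k + 1) 2 = k * (k + 1) := by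
    rw [Nat.choose_two_right, Nat.add_sub_cancel, mul_comm (k + 1) k]
    exact Nat.mul_div_cancel' (Nat.even_mul_succ_self k).two_dvd
  have h5 : (2 * n + k) * n + (n + k) ^ 2 = 3 * (n * n) + 3 * (n * k) + k * k := by ring
  rw [h5]
  omega
end
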